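/- arXiv:2504.06773 — 3 statements merged into one kernel-verified Lean document; each statement's English description precedes it below -/
import Mathlib

section
/- Let λ∈(0,1) and let S:ℝ^d×ℝ^d→ℝ be a C² function with S(x+m,X+m)=S(x,X) for all m∈ℤ^d, such that for all (x,X) the matrices ∂²S/∂x²(x,X) and ∂²S/∂X²(x,X) are positive definite and ∂²S/∂x∂X(x,X) is negative definite, and S(x,X)/‖x−X‖ → +∞ as ‖x−X‖→∞. Let F:ℝ^{2d}→ℝ^{2d} be a C¹ diffeomorphism with F(x+m,y)=F(x,y)+(m,0) for all m∈ℤ^d, generated by S (i.e. writing F(x,y)=(X,Y): λy=−(∂S/∂x)(x,X) and Y=(∂S/∂X)(x,X)). Suppose F admits a C⁰-invariant Lagrangian graph L={(x,Ψ(x))} with Ψ=c+Dη (c∈ℝ^d, η C¹ ℤ^d-periodic), and let g:ℝ^d→ℝ^d be the homeomorphism with F(x,Ψ(x))=(g(x),Ψ(g(x))) for all x. Then g is bi-Lipschitz: both g and g⁻¹ are Lipschitz continuous on ℝ^d. -/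
noncomputable section

open Real

/-- The gradient of `f : ℝ^d → ℝ`, as a vector in `ℝ^d`. -/
def gradVec {d : ℕ} (f : (Fin d → ℝ) → ℝ) (x : Fin d → ℝ) : Fin d → ℝ :=
  fun i => fderiv ℝ f x (Pi.single i 1)

/-- `f` is `ℤ^d`-periodic. -/
def ZdPeriodic {d : ℕ} (f : (Fin d → ℝ) → ℝ) : Prop :=
  ∀ (x : Fin d → ℝ) (m : Fin d → ℤ), f (x + fun i => (m i : ℝ)) = f x

/-- Partial gradient of `S` in the first `ℝ^d`-variable. -/
def grad1 {d : ℕ} (S : (Fin d → ℝ) → (Fin d → ℝ) → ℝ) (x X : Fin d → ℝ) : Fin d → ℝ :=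
  fun i => fderiv ℝ (fun x' => S x' X) x (Pi.single i 1)

/-- Partial gradient of `S` in the second `ℝ^d`-variable. -/
def grad2 {d : ℕ} (S : (Fin d → ℝ) → (Fin d → ℝ) → ℝ) (x X : Fin d → ℝ) : Fin d → ℝ :=
  fun i => fderiv ℝ (fun X' => S x X') X (Pi.single i 1)

/-- The Hessian block `∂²S/∂x²(x,X)`. -/
def hessXX {d : ℕ} (S : (Fin d → ℝ) → (Fin d → ℝ) → ℝ) (x X : Fin d → ℝ) :
    Matrix (Fin d) (Fin d) ℝ :=
  Matrix.of fun i j => fderiv ℝ (fun x' => grad1 S x' X j) x (Pi.single i 1)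

/-- The Hessian block `∂²S/∂X²(x,X)`. -/
def hessYY {d : ℕ} (S : (Fin d → ℝ) → (Fin d → ℝ) → ℝ) (x X : Fin d → ℝ) :
    Matrix (Fin d) (Fin d) ℝ :=
  Matrix.of fun i j => fderiv ℝ (fun X' => grad2 S x X' j) X (Pi.single i 1)

/-- The mixed Hessian block `∂²S/∂x∂X(x,X)`. -/
def hessXY {d : ℕ} (S : (Fin d → ℝ) → (Fin d → ℝ) → ℝ) (x X : Fin d → ℝ) :
    Matrix (Fin d) (Fin d) ℝ :=
  Matrix.of fun i j => fderiv ℝ (fun x' => grad2 S x' X j) x (Pi.single i 1)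

open Set Filter Topology Metric

/-- A superlinear function dominates one of linear growth at infinity. -/
theorem tendsto_add_cocompact_atTop {E : Type*} [NormedAddCommGroup E] [ProperSpace E]
    {u h : E → ℝ} {B : ℝ} {a : E}
    (hu : ∀ x, -(B * (1 + ‖x‖)) ≤ u x)
    (hh : ∀ A : ℝ, ∃ R : ℝ, ∀ x, R ≤ ‖x - a‖ → A * ‖x - a‖ ≤ h x) :
    Tendsto (fun x => u x + h x) (cocompact E) atTop := by
  obtain ⟨R, hR⟩ := hh (|B| + 1)
  have hn := tendsto_norm_cocompact_atTop (E := E)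
  refine tendsto_atTop_mono' _ ?_
    (tendsto_atTop_add_const_right _ (-|B| - (|B| + 1) * ‖a‖) hn)
  filter_upwards [hn.eventually_ge_atTop (R + ‖a‖)] with x hx
  have hxa := norm_sub_norm_le x a
  have h₁ := hR x (by linarith)
  have h₂ := hu x
  have h₃ : B * (1 + ‖x‖) ≤ |B| * (1 + ‖x‖) := by gcongr; exact le_abs_self B
  have h₄ : (|B| + 1) * (‖x‖ - ‖a‖) ≤ (|B| + 1) * ‖x - a‖ := by gcongr
  linarith

section Calculus

variable {E : Type*} [NormedAddCommGroup E] [NormedSpace ℝ E]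

/-- A `C²` function satisfies a quadratic first-order Taylor estimate on every ball. -/
theorem exists_quadratic_taylor_bound [FiniteDimensional ℝ E] {f : E → ℝ}
    (hf : ContDiff ℝ 2 f) (R : ℝ) :
    ∃ C : ℝ, 0 ≤ C ∧ ∀ p ∈ closedBall (0 : E) R, ∀ q ∈ closedBall (0 : E) R,
      |f q - f p - fderiv ℝ f p (q - p)| ≤ C * ‖q - p‖ ^ 2 := by
  have : ProperSpace E := FiniteDimensional.proper ℝ E
  have hdf : ContDiff ℝ 1 (fderiv ℝ f) := hf.fderiv_right (by norm_num)
  obtain ⟨K, hK⟩ := hdf.contDiffOn.exists_lipschitzOnWith one_ne_zero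
    (convex_closedBall (0 : E) R) (isCompact_closedBall 0 R)
  refine ⟨K, K.2, fun p hp q hq => ?_⟩
  have key := (convex_segment (𝕜 := ℝ) p q).norm_image_sub_le_of_norm_fderiv_le' (𝕜 := ℝ)
    (f := f) (φ := fderiv ℝ f p) (C := K * ‖q - p‖)
    (fun z _ => hf.differentiable (by norm_num) z) (fun z hz => ?_)
    (left_mem_segment ℝ p q) (right_mem_segment ℝ p q)
  · rw [Real.norm_eq_abs] at key
    linarith [key, sq ‖q - p‖, mul_assoc (K : ℝ) ‖q - p‖ ‖q - p‖]
  · have hz' := (convex_closedBall (0 : E) R).segment_subset hp hq hz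
    refine (hK.norm_sub_le hz' hp).trans ?_
    gcongr
    obtain ⟨t, ht, rfl⟩ := (segment_eq_image' ℝ p q ▸ hz :)
    rw [add_sub_cancel_left, norm_smul, Real.norm_eq_abs, abs_of_nonneg ht.1]
    exact mul_le_of_le_one_left (norm_nonneg _) ht.2

/-- A function with two-sided quadratic first-order estimates has a Lipschitz differential. -/
theorem lipschitzOnWith_of_quadratic_bound {u : E → ℝ} {ψ : E → E →L[ℝ] ℝ} {C R : ℝ}
    (hC : 0 ≤ C)
    (h : ∀ x ∈ closedBall (0 : E) (3 * R), ∀ z ∈ closedBall (0 : E) (3 * R),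
      |u z - u x - ψ x (z - x)| ≤ C * ‖z - x‖ ^ 2) :
    LipschitzOnWith (6 * C).toNNReal ψ (closedBall (0 : E) R) := by
  refine LipschitzOnWith.of_dist_le_mul fun y hy x hx => ?_
  rw [Real.coe_toNNReal _ (by positivity), dist_eq_norm, dist_eq_norm]
  rcases eq_or_ne y x with rfl | hyx
  · simp
  rw [mem_closedBall_zero_iff] at hx hy
  have hr : 0 < ‖y - x‖ := norm_pos_iff.2 (sub_ne_zero.2 hyx)
  have hr2 : ‖y - x‖ ≤ 2 * R := (norm_sub_le _ _).trans (by linarith)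
  have key : ∀ w : E, ‖w‖ = ‖y - x‖ → (ψ y - ψ x) w ≤ 6 * C * ‖y - x‖ ^ 2 := by
    intro w hw
    have hx' : x ∈ closedBall (0 : E) (3 * R) := by
      rw [mem_closedBall_zero_iff]; linarith
    have hy' : y ∈ closedBall (0 : E) (3 * R) := by
      rw [mem_closedBall_zero_iff]; linarith
    have hz' : y + w ∈ closedBall (0 : E) (3 * R) := by
      rw [mem_closedBall_zero_iff]
      exact (norm_add_le _ _).trans (by linarith)
    have h₁ := (abs_le.1 (h x hx' (y + w) hz')).2
    have h₂ := (abs_le.1 (h y hy' (y + w) hz')).1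
    have h₃ := (abs_le.1 (h x hx' y hy')).1
    have hsplit : y + w - x = (y - x) + w := by abel
    have hn : ‖(y - x) + w‖ ^ 2 ≤ (2 * ‖y - x‖) ^ 2 := by
      gcongr
      exact (norm_add_le _ _).trans (by linarith)
    have hn' := mul_le_mul_of_nonneg_left hn hC
    rw [hsplit, map_add] at h₁
    rw [add_sub_cancel_left, hw] at h₂
    rw [sub_apply]
    nlinarith
  refine ContinuousLinearMap.opNorm_le_of_unit_norm (by positivity) fun v hv => ?_
  have hpos := key (‖y - x‖ • v) (by simp [norm_smul, hv])
  have hneg := key (-(‖y - x‖ • v)) (by simp [norm_smul, hv])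
  rw [map_neg, map_smul, smul_eq_mul] at hneg
  rw [map_smul, smul_eq_mul] at hpos
  rw [Real.norm_eq_abs, abs_le]
  constructor <;> refine le_of_mul_le_mul_left ?_ hr <;> linarith

/-- A coercive function attains its minimum at its only possible critical point. -/
theorem le_of_unique_critical_point {h : E → ℝ} {x₀ : E} (hc : Continuous h)
    (hcoer : Tendsto h (cocompact E) atTop) (huniq : ∀ x, fderiv ℝ h x = 0 → x = x₀) (x : E) :
    h x₀ ≤ h x := by
  obtain ⟨z, hz⟩ := hc.exists_forall_le hcoer
  rw [← huniq z (IsLocalMin.fderiv_eq_zero (Eventually.of_forall hz))]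
  exact hz x

theorem fderiv_apply_strictAnti_on_line {f : E → ℝ} (hf : ContDiff ℝ 2 f) {p w z : E}
    (h : ∀ q, fderiv ℝ (fderiv ℝ f) q w z < 0) : fderiv ℝ f (p + w) z < fderiv ℝ f p z := by
  have hdf : Differentiable ℝ (fderiv ℝ f) :=
    (hf.fderiv_right (m := 1) (by norm_num)).differentiable one_ne_zero
  have hd : ∀ t : ℝ, HasDerivAt (fun t : ℝ => fderiv ℝ f (p + t • w) z)
      (fderiv ℝ (fderiv ℝ f) (p + t • w) w z) t := by
    intro t
    have hline : HasDerivAt (fun t : ℝ => p + t • w) w t := by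
      simpa using ((hasDerivAt_id t).smul_const w).const_add p
    simpa using ((hdf _).hasFDerivAt.comp_hasDerivAt t hline).clm_apply (hasDerivAt_const t z)
  have := strictAnti_of_deriv_neg (fun t => (hd t).deriv ▸ h _) zero_lt_one
  simpa using this

end Calculus

section Twist

variable {E : Type*} [NormedAddCommGroup E] [NormedSpace ℝ E] {f : E × E → ℝ}

theorem hasFDerivAt_slice_left {p : E × E} (hf : DifferentiableAt ℝ f p) :
    HasFDerivAt (fun x => f (x, p.2)) ((fderiv ℝ f p).comp (.inl ℝ E E)) p.1 :=
  HasFDerivAt.comp (g := f) p.1 hf.hasFDerivAt (hasFDerivAt_prodMk_left p.1 p.2)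

theorem hasFDerivAt_slice_right {p : E × E} (hf : DifferentiableAt ℝ f p) :
    HasFDerivAt (fun X => f (p.1, X)) ((fderiv ℝ f p).comp (.inr ℝ E E)) p.2 :=
  HasFDerivAt.comp (g := f) p.2 hf.hasFDerivAt (hasFDerivAt_prodMk_right p.1 p.2)

theorem eq_of_fderiv_inr_eq (hf : ContDiff ℝ 2 f)
    (htwist : ∀ p v, v ≠ 0 → fderiv ℝ (fderiv ℝ f) p (v, 0) (0, v) < 0) {x x' X : E}
    (h : (fderiv ℝ f (x, X)).comp (.inr ℝ E E) = (fderiv ℝ f (x', X)).comp (.inr ℝ E E)) :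
    x = x' := by
  by_contra hne
  have hlt := fderiv_apply_strictAnti_on_line hf (p := (x, X))
    fun q => htwist q (x' - x) (sub_ne_zero.2 (Ne.symm hne))
  have hev := DFunLike.congr_fun h (x' - x)
  simp only [Prod.mk_add_mk, add_sub_cancel, add_zero] at hlt
  simp only [ContinuousLinearMap.comp_apply, ContinuousLinearMap.inr_apply] at hev
  linarith

theorem eq_of_fderiv_inl_eq (hf : ContDiff ℝ 2 f)
    (htwist : ∀ p v, v ≠ 0 → fderiv ℝ (fderiv ℝ f) p (v, 0) (0, v) < 0) {x X X' : E}
    (h : (fderiv ℝ f (x, X)).comp (.inl ℝ E E) = (fderiv ℝ f (x, X')).comp (.inl ℝ E E)) :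
    X = X' := by
  by_contra hne
  have hlt := fderiv_apply_strictAnti_on_line hf (p := (x, X)) (w := (0, X' - X))
    (z := (X' - X, 0)) fun q => by
      rw [(hf.contDiffAt.isSymmSndFDerivAt (by simp)) (0, X' - X) (X' - X, 0)]
      exact htwist q (X' - X) (sub_ne_zero.2 (Ne.symm hne))
  have hev := DFunLike.congr_fun h (X' - X)
  simp only [Prod.mk_add_mk, add_sub_cancel, add_zero] at hlt
  simp only [ContinuousLinearMap.comp_apply, ContinuousLinearMap.inl_apply] at hev
  linarith

/-- An invariant exact graph `y = du(x)` of the twist map generated by `f` is locally Lipschitz: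
the two variational characterisations of its dynamics make `u` semiconcave and semiconvex. -/
theorem exists_lipschitzOnWith_fderiv_of_generating [FiniteDimensional ℝ E]
    (hf : ContDiff ℝ 2 f)
    (htwist : ∀ p v, v ≠ 0 → fderiv ℝ (fderiv ℝ f) p (v, 0) (0, v) < 0)
    (hcoer : ∀ A : ℝ, ∃ R : ℝ, ∀ x X, R ≤ ‖x - X‖ → A * ‖x - X‖ ≤ f (x, X))
    {u : E → ℝ} (hu : ContDiff ℝ 1 u) {B : ℝ} (hB : ∀ x, |u x| ≤ B * (1 + ‖x‖))
    {lam : ℝ} (hlam : 0 < lam) {g ginv : E → E} (hg : Continuous g) (hginv : Continuous ginv)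
    (hgl : ∀ x, ginv (g x) = x) (hgr : ∀ x, g (ginv x) = x)
    (hleft : ∀ x, lam • fderiv ℝ u x = -(fderiv ℝ f (x, g x)).comp (.inl ℝ E E))
    (hright : ∀ x, fderiv ℝ u (g x) = (fderiv ℝ f (x, g x)).comp (.inr ℝ E E)) (R : ℝ) :
    ∃ K, LipschitzOnWith K (fderiv ℝ u) (closedBall (0 : E) R) := by
  have : ProperSpace E := FiniteDimensional.proper ℝ E
  have hdf : Differentiable ℝ f := hf.differentiable (by norm_num)
  have hdu : Differentiable ℝ u := hu.differentiable one_ne_zero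
  have hfc : Continuous f := hf.continuous
  have hminLeft : ∀ x x', lam * u x + f (x, g x) ≤ lam * u x' + f (x', g x) := by
    intro x
    refine le_of_unique_critical_point (h := fun x' => lam * u x' + f (x', g x))
      (by fun_prop) (tendsto_add_cocompact_atTop (B := lam * B) (a := g x) (fun x' => ?_)
        fun A => ?_) fun x' hx' => ?_
    · have := mul_le_mul_of_nonneg_left (abs_le.1 (hB x')).1 hlam.le
      linarith
    · obtain ⟨r, hr⟩ := hcoer A
      exact ⟨r, fun x' hx' => hr x' (g x) hx'⟩
    · replace hx' := hx'.symm.trans (((hdu x').hasFDerivAt.const_mul lam).add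
        (hasFDerivAt_slice_left (hdf (x', g x)))).fderiv
      rw [hleft x', eq_comm, neg_add_eq_zero] at hx'
      rw [← hgl x', eq_of_fderiv_inl_eq hf htwist hx', hgl]
  have hminRight : ∀ x X, f (x, g x) - u (g x) ≤ f (x, X) - u X := by
    intro x X
    have := le_of_unique_critical_point (h := fun X => -u X + f (x, X)) (x₀ := g x)
      (by fun_prop) (tendsto_add_cocompact_atTop (B := B) (a := x) (fun X => ?_)
        fun A => ?_) (fun X hX => ?_) X
    · linarith
    · linarith [(abs_le.1 (hB X)).2]
    · obtain ⟨r, hr⟩ := hcoer A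
      exact ⟨r, fun X hX => norm_sub_rev X x ▸ hr x X (norm_sub_rev X x ▸ hX)⟩
    · replace hX := hX.symm.trans ((hdu X).hasFDerivAt.neg.add
        (hasFDerivAt_slice_right (hdf (x, X)))).fderiv
      rw [eq_comm, neg_add_eq_zero] at hX
      have hXX := hright (ginv X)
      rw [hgr, hX] at hXX
      rw [eq_of_fderiv_inr_eq hf htwist hXX, hgr]
  obtain ⟨M, hM⟩ := ((isCompact_closedBall (0 : E) (3 * R)).image hg).isBounded.subset_closedBall 0
  obtain ⟨N, hN⟩ :=
    ((isCompact_closedBall (0 : E) (3 * R)).image hginv).isBounded.subset_closedBall 0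
  obtain ⟨C, hC, hCf⟩ := exists_quadratic_taylor_bound hf (max (3 * R) (max M N))
  have hmem : ∀ {a b : E}, ‖a‖ ≤ max (3 * R) (max M N) → ‖b‖ ≤ max (3 * R) (max M N) →
      (a, b) ∈ closedBall (0 : E × E) (max (3 * R) (max M N)) := fun ha hb => by
    rw [mem_closedBall_zero_iff]; exact max_le ha hb
  refine ⟨_, lipschitzOnWith_of_quadratic_bound (u := u) (C := C + C / lam) (by positivity)
    fun x hx z hz => ?_⟩
  have hgx := mem_closedBall_zero_iff.1 (hM (mem_image_of_mem g hx))
  have hix := mem_closedBall_zero_iff.1 (hN (mem_image_of_mem ginv hx))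
  rw [mem_closedBall_zero_iff] at hx hz
  have hupper : u z - u x - fderiv ℝ u x (z - x) ≤ C * ‖z - x‖ ^ 2 := by
    have h₁ := hminRight (ginv x) z
    have h₂ := (abs_le.1 (hCf (ginv x, x) (hmem (by simp [hix]) (by simp [hx]))
      (ginv x, z) (hmem (by simp [hix]) (by simp [hz])))).2
    have h₃ := DFunLike.congr_fun (hright (ginv x)) (z - x)
    simp only [hgr, ContinuousLinearMap.comp_apply, ContinuousLinearMap.inr_apply] at h₁ h₃
    simp only [Prod.mk_sub_mk, sub_self, Prod.norm_mk, norm_zero, norm_nonneg,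
      max_eq_right] at h₂
    linarith
  have hlower : -(C / lam * ‖z - x‖ ^ 2) ≤ u z - u x - fderiv ℝ u x (z - x) := by
    have h₁ := hminLeft x z
    have h₂ := (abs_le.1 (hCf (x, g x) (hmem (by simp [hx]) (by simp [hgx]))
      (z, g x) (hmem (by simp [hz]) (by simp [hgx])))).2
    have h₃ := DFunLike.congr_fun (hleft x) (z - x)
    simp only [ContinuousLinearMap.comp_apply, ContinuousLinearMap.inl_apply, smul_apply,
      neg_apply, smul_eq_mul] at h₃
    simp only [Prod.mk_sub_mk, sub_self, Prod.norm_mk, norm_zero, norm_nonneg,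
      max_eq_left] at h₂
    refine le_of_mul_le_mul_left ?_ hlam
    have : lam * -(C / lam * ‖z - x‖ ^ 2) = -(C * ‖z - x‖ ^ 2) := by field_simp
    linarith
  have h₁ : 0 ≤ C * ‖z - x‖ ^ 2 := by positivity
  have h₂ : 0 ≤ C / lam * ‖z - x‖ ^ 2 := by positivity
  rw [abs_le]
  constructor <;> linarith

end Twist

section Coordinates

variable {d : ℕ}

theorem exists_int_translate_norm_le_one (x : Fin d → ℝ) :
    ∃ (y : Fin d → ℝ) (m : Fin d → ℤ), ‖y‖ ≤ 1 ∧ x = y + fun i => (m i : ℝ) := by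
  refine ⟨fun i => Int.fract (x i), fun i => ⌊x i⌋, ?_, ?_⟩
  · refine (pi_norm_le_iff_of_nonneg zero_le_one).2 fun i => ?_
    rw [Real.norm_eq_abs, Int.abs_fract]
    exact (Int.fract_lt_one _).le
  · ext i
    exact (Int.fract_add_floor (x i)).symm

/-- A map commuting with integer translations that is Lipschitz near a fundamental domain is
globally Lipschitz. -/
theorem exists_lipschitzWith_of_int_equivariant {h : (Fin d → ℝ) → (Fin d → ℝ)}
    (hper : ∀ (x : Fin d → ℝ) (m : Fin d → ℤ),
      h (x + fun i => (m i : ℝ)) = h x + fun i => (m i : ℝ))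
    {K : NNReal} (hK : LipschitzOnWith K h (closedBall 0 2)) : ∃ K', LipschitzWith K' h := by
  have hdisp : ∀ x, ‖h x - x‖ ≤ K + ‖h 0‖ + 1 := by
    intro x
    obtain ⟨y, m, hy, rfl⟩ := exists_int_translate_norm_le_one x
    rw [hper, add_sub_add_right_eq_sub]
    have h₁ := hK.norm_sub_le (x := y) (by rw [mem_closedBall_zero_iff]; linarith)
      (y := 0) (by simp)
    rw [sub_zero] at h₁
    have h₂ : (K : ℝ) * ‖y‖ ≤ K := mul_le_of_le_one_right K.2 hy
    calc ‖h y - y‖ = ‖(h y - h 0) + h 0 - y‖ := by rw [sub_add_cancel]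
      _ ≤ ‖h y - h 0‖ + ‖h 0‖ + ‖y‖ := (norm_sub_le _ _).trans (by gcongr; exact norm_add_le _ _)
      _ ≤ K + ‖h 0‖ + 1 := by linarith
  have hB : 0 ≤ 1 + 2 * (K + ‖h 0‖ + 1) := by positivity
  refine ⟨K + (1 + 2 * (K + ‖h 0‖ + 1)).toNNReal, LipschitzWith.of_dist_le_mul fun x z => ?_⟩
  rw [NNReal.coe_add, Real.coe_toNNReal _ hB, dist_eq_norm, dist_eq_norm, add_mul]
  rcases le_total ‖x - z‖ 1 with hxz | hxz
  · obtain ⟨y, m, hy, rfl⟩ := exists_int_translate_norm_le_one x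
    obtain ⟨w, rfl⟩ : ∃ w, z = w + fun i => (m i : ℝ) := ⟨z - fun i => (m i : ℝ), by simp⟩
    rw [add_sub_add_right_eq_sub] at hxz
    rw [hper, hper, add_sub_add_right_eq_sub, add_sub_add_right_eq_sub]
    have hw : ‖w‖ ≤ 2 := by linarith [norm_sub_norm_le w y, norm_sub_rev w y]
    refine (hK.norm_sub_le (by rw [mem_closedBall_zero_iff]; linarith)
      (by rwa [mem_closedBall_zero_iff])).trans (le_add_of_nonneg_right (by positivity))
  · have hsplit : h x - h z = (h x - x) - (h z - z) + (x - z) := by abel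
    have h₁ : ‖h x - h z‖ ≤ ‖h x - x‖ + ‖h z - z‖ + ‖x - z‖ := by
      rw [hsplit]
      exact (norm_add_le _ _).trans (by gcongr; exact norm_sub_le _ _)
    have h₂ : 2 * (K + ‖h 0‖ + 1) ≤ 2 * (K + ‖h 0‖ + 1) * ‖x - z‖ :=
      le_mul_of_one_le_right (by positivity) hxz
    have h₃ : 0 ≤ (K : ℝ) * ‖x - z‖ := by positivity
    linarith [hdisp x, hdisp z]

theorem ZdPeriodic.exists_abs_le {f : (Fin d → ℝ) → ℝ} (hper : ZdPeriodic f)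
    (hf : Continuous f) : ∃ M, ∀ x, |f x| ≤ M := by
  obtain ⟨M, hM⟩ := (isCompact_closedBall (0 : Fin d → ℝ) 1).exists_bound_of_continuousOn
    hf.continuousOn
  refine ⟨M, fun x => ?_⟩
  obtain ⟨y, m, hy, rfl⟩ := exists_int_translate_norm_le_one x
  rw [hper]
  exact hM y (mem_closedBall_zero_iff.2 hy)

theorem ZdPeriodic.gradVec_add_int {f : (Fin d → ℝ) → ℝ} (hper : ZdPeriodic f)
    (x : Fin d → ℝ) (m : Fin d → ℤ) : gradVec f (x + fun i => (m i : ℝ)) = gradVec f x := by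
  ext i
  rw [gradVec, ← fderiv_comp_add_right]
  simp only [hper _ m]
  rfl

theorem ContinuousLinearMap.ext_pi_single {φ ψ : (Fin d → ℝ) →L[ℝ] ℝ}
    (h : ∀ i, φ (Pi.single i 1) = ψ (Pi.single i 1)) : φ = ψ :=
  ContinuousLinearMap.coe_injective ((Pi.basisFun ℝ (Fin d)).ext fun i => by simpa using h i)

variable {S : (Fin d → ℝ) → (Fin d → ℝ) → ℝ}

theorem grad1_apply (hS : Differentiable ℝ fun p : (Fin d → ℝ) × (Fin d → ℝ) => S p.1 p.2)
    (x X : Fin d → ℝ) (i : Fin d) :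
    grad1 S x X i = fderiv ℝ (fun p : (Fin d → ℝ) × (Fin d → ℝ) => S p.1 p.2) (x, X)
      (Pi.single i 1, 0) := by
  rw [grad1, (hasFDerivAt_slice_left (hS (x, X))).fderiv]
  rfl

theorem grad2_apply (hS : Differentiable ℝ fun p : (Fin d → ℝ) × (Fin d → ℝ) => S p.1 p.2)
    (x X : Fin d → ℝ) (i : Fin d) :
    grad2 S x X i = fderiv ℝ (fun p : (Fin d → ℝ) × (Fin d → ℝ) => S p.1 p.2) (x, X)
      (0, Pi.single i 1) := by
  rw [grad2, (hasFDerivAt_slice_right (hS (x, X))).fderiv]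
  rfl

theorem hessXY_apply (hS : ContDiff ℝ 2 fun p : (Fin d → ℝ) × (Fin d → ℝ) => S p.1 p.2)
    (x X : Fin d → ℝ) (i j : Fin d) :
    hessXY S x X i j =
      fderiv ℝ (fderiv ℝ fun p : (Fin d → ℝ) × (Fin d → ℝ) => S p.1 p.2) (x, X)
        (Pi.single i 1, 0) (0, Pi.single j 1) := by
  have hdf : Differentiable ℝ (fderiv ℝ fun p : (Fin d → ℝ) × (Fin d → ℝ) => S p.1 p.2) :=
    (hS.fderiv_right (m := 1) (by norm_num)).differentiable one_ne_zero
  have hd := (hdf (x, X)).hasFDerivAt.clm_apply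
    (hasFDerivAt_const ((0, Pi.single j 1) : (Fin d → ℝ) × (Fin d → ℝ)) (x, X))
  simp only [hessXY, Matrix.of_apply, grad2_apply (hS.differentiable (by norm_num))]
  have hslice := HasFDerivAt.comp x hd (hasFDerivAt_prodMk_left (𝕜 := ℝ) x X)
  refine (DFunLike.congr_fun hslice.fderiv _).trans ?_
  simp

theorem dotProduct_hessXY_mulVec
    (hS : ContDiff ℝ 2 fun p : (Fin d → ℝ) × (Fin d → ℝ) => S p.1 p.2) (x X v : Fin d → ℝ) :
    v ⬝ᵥ (hessXY S x X).mulVec v =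
      fderiv ℝ (fderiv ℝ fun p : (Fin d → ℝ) × (Fin d → ℝ) => S p.1 p.2) (x, X)
        (v, 0) (0, v) := by
  have hl : ((v, 0) : (Fin d → ℝ) × (Fin d → ℝ)) = ∑ i, v i • (Pi.single i 1, 0) := by
    conv_lhs => rw [← LinearMap.inl_apply (R := ℝ), pi_eq_sum_univ' v, map_sum]
    simp [Prod.smul_mk]
  have hr : ((0, v) : (Fin d → ℝ) × (Fin d → ℝ)) = ∑ i, v i • (0, Pi.single i 1) := by
    conv_lhs => rw [← LinearMap.inr_apply (R := ℝ), pi_eq_sum_univ' v, map_sum]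
    simp [Prod.smul_mk]
  rw [hl, hr]
  simp only [map_sum, map_smul, _root_.sum_apply, _root_.smul_apply, dotProduct, Matrix.mulVec,
    hessXY_apply hS, smul_eq_mul, Finset.mul_sum]
  rw [Finset.sum_comm]
  refine Finset.sum_congr rfl fun i _ => Finset.sum_congr rfl fun j _ => ?_
  ring

/-- The base dynamics of a `C¹` map restricted to a locally Lipschitz graph is locally Lipschitz. -/
theorem exists_lipschitzOnWith_fst_comp_graph
    {G : (Fin d → ℝ) × (Fin d → ℝ) → (Fin d → ℝ) × (Fin d → ℝ)} (hG : ContDiff ℝ 1 G)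
    {Ψ : (Fin d → ℝ) → (Fin d → ℝ)} {K : NNReal} {R : ℝ}
    (hΨ : LipschitzOnWith K Ψ (closedBall 0 R)) :
    ∃ K', LipschitzOnWith K' (fun x => (G (x, Ψ x)).1) (closedBall 0 R) := by
  have hgraph := LipschitzWith.id.lipschitzOnWith.prodMk hΨ
  obtain ⟨M, hM⟩ := ((isCompact_closedBall (0 : Fin d → ℝ) R).image_of_continuousOn
    hgraph.continuousOn).isBounded.subset_closedBall 0
  obtain ⟨L, hL⟩ := hG.fst.contDiffOn.exists_lipschitzOnWith one_ne_zero
    (convex_closedBall 0 M) (isCompact_closedBall 0 M)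
  exact ⟨_, hL.comp hgraph fun x hx => hM (mem_image_of_mem _ hx)⟩

end Coordinates

theorem conjugacy_is_biLipschitz (d : ℕ) (lam : ℝ) (hlam : lam ∈ Set.Ioo (0 : ℝ) 1)
    (S : (Fin d → ℝ) → (Fin d → ℝ) → ℝ)
    (hS : ContDiff ℝ 2 (fun p : (Fin d → ℝ) × (Fin d → ℝ) => S p.1 p.2))
    (hSper : ∀ (x X : Fin d → ℝ) (m : Fin d → ℤ),
      S (x + fun i => (m i : ℝ)) (X + fun i => (m i : ℝ)) = S x X)
    (hpos1 : ∀ x X : Fin d → ℝ, (hessXX S x X).PosDef)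
    (hpos2 : ∀ x X : Fin d → ℝ, (hessYY S x X).PosDef)
    (hneg : ∀ x X : Fin d → ℝ, (-(hessXY S x X)).PosDef)
    (hcoer : ∀ A : ℝ, ∃ R : ℝ, ∀ x X : Fin d → ℝ, R ≤ ‖x - X‖ → A ≤ S x X / ‖x - X‖)
    (F Finv : (Fin d → ℝ) × (Fin d → ℝ) → (Fin d → ℝ) × (Fin d → ℝ))
    (hF : ContDiff ℝ 1 F) (hFinv : ContDiff ℝ 1 Finv)
    (hFl : ∀ p, Finv (F p) = p) (hFr : ∀ p, F (Finv p) = p)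
    (hFper : ∀ (p : (Fin d → ℝ) × (Fin d → ℝ)) (m : Fin d → ℤ),
      F (p.1 + fun i => (m i : ℝ), p.2) = ((F p).1 + fun i => (m i : ℝ), (F p).2))
    (hgen : ∀ p : (Fin d → ℝ) × (Fin d → ℝ),
      lam • p.2 = -(grad1 S p.1 (F p).1) ∧ (F p).2 = grad2 S p.1 (F p).1)
    (c : Fin d → ℝ) (η : (Fin d → ℝ) → ℝ) (hη : ContDiff ℝ 1 η) (hηper : ZdPeriodic η)
    (Ψ : (Fin d → ℝ) → (Fin d → ℝ)) (hΨ : ∀ x, Ψ x = c + gradVec η x)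
    (hinv : F '' {p | p.2 = Ψ p.1} = {p | p.2 = Ψ p.1})
    -- g is the homeomorphism with F(x, Ψ x) = (g x, Ψ (g x))
    (g ginv : (Fin d → ℝ) → (Fin d → ℝ))
    (hgc : Continuous g) (hginvc : Continuous ginv)
    (hgl : ∀ x, ginv (g x) = x) (hgr : ∀ x, g (ginv x) = x)
    (hconj : ∀ x, F (x, Ψ x) = (g x, Ψ (g x))) :
    -- g is bi-Lipschitz
    ∃ Kg Kginv : NNReal, LipschitzWith Kg g ∧ LipschitzWith Kginv ginv := by
  set f : (Fin d → ℝ) × (Fin d → ℝ) → ℝ := fun p => S p.1 p.2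
  have hdf : Differentiable ℝ f := hS.differentiable (by norm_num)
  have hdη : Differentiable ℝ η := hη.differentiable one_ne_zero
  let L : (Fin d → ℝ) →L[ℝ] ℝ := ∑ i, c i • ContinuousLinearMap.proj i
  have hLs : ∀ i, L (Pi.single i 1) = c i := fun i => by
    simp [L, Pi.single_apply]
  have hdu : ∀ x, fderiv ℝ (fun x => L x + η x) x = L + fderiv ℝ η x := fun x =>
    (L.hasFDerivAt.add (hdη x).hasFDerivAt).fderiv
  have hΨu : ∀ x i, fderiv ℝ (fun x => L x + η x) x (Pi.single i 1) = Ψ x i := fun x i => by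
    rw [hdu, hΨ, add_apply, hLs]
    rfl
  obtain ⟨M, hM⟩ := hηper.exists_abs_le hη.continuous
  have hM0 : 0 ≤ M := (abs_nonneg _).trans (hM 0)
  have htwist : ∀ p v, v ≠ 0 → fderiv ℝ (fderiv ℝ f) p (v, 0) (0, v) < 0 := by
    rintro ⟨x, X⟩ v hv
    have := (hneg x X).dotProduct_mulVec_pos hv
    rw [star_trivial, Matrix.neg_mulVec, dotProduct_neg, dotProduct_hessXY_mulVec hS] at this
    linarith
  have hsuper : ∀ A : ℝ, ∃ R : ℝ, ∀ x X, R ≤ ‖x - X‖ → A * ‖x - X‖ ≤ f (x, X) := by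
    intro A
    obtain ⟨R, hR⟩ := hcoer A
    refine ⟨max R 1, fun x X hxX => ?_⟩
    exact (le_div_iff₀ (zero_lt_one.trans_le ((le_max_right _ _).trans hxX))).1
      (hR x X ((le_max_left _ _).trans hxX))
  have hgrowth : ∀ x, |L x + η x| ≤ (‖L‖ + M) * (1 + ‖x‖) := by
    intro x
    have h₁ : |L x| ≤ ‖L‖ * ‖x‖ := L.le_opNorm x
    have h₂ : 0 ≤ M * ‖x‖ := by positivity
    have h₃ := norm_nonneg L
    linarith [abs_add_le (L x) (η x), hM x]
  have hleft : ∀ x, lam • fderiv ℝ (fun x => L x + η x) x =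
      -(fderiv ℝ f (x, g x)).comp (.inl ℝ _ _) := by
    refine fun x => ContinuousLinearMap.ext_pi_single fun i => ?_
    have h := congrFun (hgen (x, Ψ x)).1 i
    rw [hconj, Pi.neg_apply, grad1_apply hdf] at h
    rw [smul_apply, hΨu]
    exact h
  have hright : ∀ x, fderiv ℝ (fun x => L x + η x) (g x) =
      (fderiv ℝ f (x, g x)).comp (.inr ℝ _ _) := by
    refine fun x => ContinuousLinearMap.ext_pi_single fun i => ?_
    have h := congrFun (hgen (x, Ψ x)).2 i
    rw [hconj, grad2_apply hdf] at h
    rw [hΨu]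
    exact h
  obtain ⟨K, hK⟩ := exists_lipschitzOnWith_fderiv_of_generating hS htwist hsuper
    (L.contDiff.add hη) hgrowth hlam.1 hgc hginvc hgl hgr hleft hright 2
  have hΨlip : LipschitzOnWith K Ψ (closedBall 0 2) := by
    refine LipschitzOnWith.of_dist_le_mul fun x hx y hy => ?_
    refine (dist_pi_le_iff (by positivity)).2 fun i => ?_
    rw [← hΨu, ← hΨu, dist_eq_norm, ← sub_apply]
    refine (ContinuousLinearMap.le_opNorm _ _).trans ?_
    rw [Pi.norm_single, norm_one, mul_one, ← dist_eq_norm]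
    exact hK.dist_le_mul x hx y hy
  have hgF : g = fun x => (F (x, Ψ x)).1 := by
    ext1 x
    rw [hconj]
  have hginvF : ginv = fun x => (Finv (x, Ψ x)).1 := by
    ext1 x
    have := hFl (ginv x, Ψ (ginv x))
    rw [hconj, hgr] at this
    rw [this]
  have hgper : ∀ (x : Fin d → ℝ) (m : Fin d → ℤ),
      g (x + fun i => (m i : ℝ)) = g x + fun i => (m i : ℝ) := by
    intro x m
    have hΨper : Ψ (x + fun i => (m i : ℝ)) = Ψ x := by
      rw [hΨ, hΨ, hηper.gradVec_add_int]
    simp only [hgF, hΨper]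
    rw [hFper (x, Ψ x) m]
  have hginvper : ∀ (x : Fin d → ℝ) (m : Fin d → ℤ),
      ginv (x + fun i => (m i : ℝ)) = ginv x + fun i => (m i : ℝ) := by
    intro x m
    rw [← hgl (ginv x + _), hgper, hgr]
  obtain ⟨K₁, hK₁⟩ := exists_lipschitzOnWith_fst_comp_graph hF hΨlip
  obtain ⟨K₂, hK₂⟩ := exists_lipschitzOnWith_fst_comp_graph hFinv hΨlip
  rw [← hgF] at hK₁
  rw [← hginvF] at hK₂
  obtain ⟨Kg, hKg⟩ := exists_lipschitzWith_of_int_equivariant hgper hK₁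
  obtain ⟨Kginv, hKginv⟩ := exists_lipschitzWith_of_int_equivariant hginvper hK₂
  exact ⟨Kg, Kginv, hKg, hKginv⟩
end
end

section
/- Let d≥1 and Δ>0. There exists a sequence (f_n)_{n≥1} of C^∞ ℤ^d-periodic functions f_n:ℝ^d→ℝ such that for every n≥1: ∫_{[0,1]^d} f_n(x)dx = 0; min_{x∈[0,1]^d} f_n(x) = −(Δ + 1/(4n)); max_{x∈[0,1]^d} f_n(x) = 3/(4n); and for every integer k≥0 there is a constant C>0 (depending only on d, Δ and k) with ‖f_n‖_{C^k} ≤ C·n^{(k+1)/d} for all n≥1. -/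
noncomputable section

open Real MeasureTheory

/-- All derivatives of a smooth function of period `2` in every variable are bounded. -/
lemma exists_norm_iteratedFDeriv_le_of_periodic {d : ℕ} {F : Type*} [NormedAddCommGroup F]
    [NormedSpace ℝ F] {f : (Fin d → ℝ) → F} (hf : ContDiff ℝ (⊤ : ℕ∞) f)
    (hper : ∀ (x : Fin d → ℝ) (m : Fin d → ℤ), f (x + fun i => 2 * (m i : ℝ)) = f x) (k : ℕ) :
    ∃ C, ∀ x, ‖iteratedFDeriv ℝ k f x‖ ≤ C := by
  have hcont : Continuous (iteratedFDeriv ℝ k f) :=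
    hf.continuous_iteratedFDeriv (by exact_mod_cast le_top)
  obtain ⟨C, hC⟩ := (isCompact_Icc (a := (0 : Fin d → ℝ)) (b := 2)).exists_bound_of_continuousOn
    hcont.continuousOn
  refine ⟨C, fun x => ?_⟩
  have hshift : (fun z => f (z + fun i => 2 * ((-⌊x i / 2⌋ : ℤ) : ℝ))) = f :=
    funext fun z => hper z _
  rw [← hshift, iteratedFDeriv_comp_add_right]
  refine hC _ ⟨fun i => ?_, fun i => ?_⟩
  · have := Int.floor_le (x i / 2)
    simp only [Pi.zero_apply, Pi.add_apply]
    push_cast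
    linarith
  · have := Int.lt_floor_add_one (x i / 2)
    simp only [Pi.ofNat_apply, Pi.add_apply]
    push_cast
    linarith

/-- A family of bounds indexed by `ℕ` can be made uniform over the indices up to `k`. -/
lemma exists_one_le_bound_of_le {α : Type*} {u : ℕ → α → ℝ} (h : ∀ i, ∃ C, ∀ x, u i x ≤ C)
    (k : ℕ) : ∃ C, 1 ≤ C ∧ ∀ i ≤ k, ∀ x, u i x ≤ C := by
  choose c hc using h
  have hk : (Finset.range (k + 1)).Nonempty := ⟨0, by simp⟩
  refine ⟨max 1 ((Finset.range (k + 1)).sup' hk c), le_max_left _ _, fun i hi x => ?_⟩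
  exact (hc i x).trans ((Finset.le_sup' c (by simp; omega)).trans (le_max_right _ _))

/-- If `b` is a cut-off function equal to `1` on `[-cos (π δ), cos (π δ)]` and vanishing off
`(-1, 1)`, the mean of `b (l * sin (π x))` takes every value `s ∈ (0, 1 - 2 δ]` for some frequency
`l ∈ [1, 1 / s]`. -/
lemma exists_integral_comp_mul_sin_eq {b : ℝ → ℝ} {δ s : ℝ} (hb : Continuous b)
    (hb0 : ∀ y, 0 ≤ b y) (hb1 : ∀ y, b y ≤ 1) (hbin : ∀ y, |y| ≤ cos (π * δ) → b y = 1)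
    (hbout : ∀ y, 1 ≤ |y| → b y = 0) (hδ : 0 ≤ δ) (hδ' : δ ≤ 1 / 2) (hs : 0 < s)
    (hsδ : s ≤ 1 - 2 * δ) :
    ∃ l, 1 ≤ l ∧ l ≤ 1 / s ∧ ∫ x in (0 : ℝ)..1, b (l * sin (π * x)) = s := by
  have hpi := Real.pi_pos
  have hcont : ∀ l : ℝ, Continuous fun x : ℝ => b (l * sin (π * x)) := fun l => by fun_prop
  have hint : ∀ l p q : ℝ, IntervalIntegrable (fun x => b (l * sin (π * x))) volume p q :=
    fun l p q => (hcont l).intervalIntegrable p q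
  have hsplit : ∀ l p : ℝ, ∫ x in (0 : ℝ)..1, b (l * sin (π * x)) =
      (∫ x in (0 : ℝ)..p, b (l * sin (π * x))) + (∫ x in p..(1 - p), b (l * sin (π * x))) +
      ∫ x in (1 - p)..1, b (l * sin (π * x)) := fun l p => by
    rw [intervalIntegral.integral_add_adjacent_intervals (hint _ _ _) (hint _ _ _),
      intervalIntegral.integral_add_adjacent_intervals (hint _ _ _) (hint _ _ _)]
  have hsymm : ∀ x : ℝ, sin (π * (1 - x)) = sin (π * x) := fun x => by
    rw [mul_sub, mul_one, sin_pi_sub]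
  have hreflect : ∀ l p : ℝ, ∫ x in (1 - p)..1, b (l * sin (π * x)) =
      ∫ x in (0 : ℝ)..p, b (l * sin (π * x)) := fun l p => by
    have := intervalIntegral.integral_comp_sub_left
      (fun x => b (l * sin (π * x))) (a := 0) (b := p) 1
    simp only [hsymm, sub_zero] at this
    exact this.symm
  have hlow : s ≤ ∫ x in (0 : ℝ)..1, b (1 * sin (π * x)) := by
    rw [hsplit 1 (1 / 2 - δ), hreflect]
    have hmid : 0 ≤ ∫ x in (1 / 2 - δ)..(1 - (1 / 2 - δ)), b (1 * sin (π * x)) :=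
      intervalIntegral.integral_nonneg (by linarith) fun x _ => hb0 _
    have hedge : ∫ x in (0 : ℝ)..(1 / 2 - δ), b (1 * sin (π * x)) = 1 / 2 - δ := by
      rw [intervalIntegral.integral_congr (g := fun _ => (1 : ℝ))]
      · simp
      · intro x hx
        rw [Set.uIcc_of_le (by linarith)] at hx
        refine hbin _ ?_
        have hx0 : 0 ≤ π * x := mul_nonneg hpi.le hx.1
        have hx1 : π * x ≤ π / 2 - π * δ := by nlinarith [hx.2]
        have hδπ : 0 ≤ π * δ := mul_nonneg hpi.le hδ
        rw [one_mul, abs_of_nonneg (sin_nonneg_of_nonneg_of_le_pi hx0 (by linarith)),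
          ← sin_pi_div_two_sub]
        exact sin_le_sin_of_le_of_le_pi_div_two (by linarith) (by linarith) hx1
    linarith
  have hs1 : s ≤ 1 := by linarith
  have hhigh : ∫ x in (0 : ℝ)..1, b (1 / s * sin (π * x)) ≤ s := by
    rw [hsplit _ (s / 2), hreflect]
    have hmid : ∫ x in (s / 2)..(1 - s / 2), b (1 / s * sin (π * x)) = 0 := by
      rw [intervalIntegral.integral_congr (g := fun _ => (0 : ℝ))]
      · simp
      · intro x hx
        rw [Set.uIcc_of_le (by linarith)] at hx
        refine hbout _ ?_
        have key : ∀ y : ℝ, s / 2 ≤ y → y ≤ 1 / 2 → s ≤ sin (π * y) := fun y hy hy' => by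
          have h := mul_le_sin (x := π * y) (by nlinarith) (by nlinarith)
          have h' : 2 / π * (π * y) = 2 * y := by field_simp
          linarith
        have hsin : s ≤ sin (π * x) := by
          rcases le_total x (1 / 2) with h | h
          · exact key x hx.1 h
          · rw [← hsymm]
            exact key _ (by linarith [hx.2]) (by linarith)
        refine le_trans ?_ (le_abs_self _)
        rw [one_div_mul_eq_div, le_div_iff₀ hs]
        linarith
    have hedge : ∫ x in (0 : ℝ)..(s / 2), b (1 / s * sin (π * x)) ≤ s / 2 := by
      have := intervalIntegral.integral_mono (by linarith : (0 : ℝ) ≤ s / 2) (hint (1 / s) _ _)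
        (intervalIntegrable_const (c := (1 : ℝ))) fun x => hb1 _
      simpa using this
    linarith
  have hJ : Continuous fun l : ℝ => ∫ x in (0 : ℝ)..1, b (l * sin (π * x)) :=
    intervalIntegral.continuous_parametric_intervalIntegral_of_continuous' (by fun_prop) _ _
  obtain ⟨l, hl, hls⟩ := intermediate_value_Icc' ((one_le_div hs).2 hs1) hJ.continuousOn
    ⟨hhigh, hlow⟩
  exact ⟨l, hl.1, hl.2, hls⟩

/-- The integral of a tensor power over the unit cube. -/
lemma integral_unitCube_prod {d : ℕ} (g : ℝ → ℝ) :
    ∫ x in Set.Icc (0 : Fin d → ℝ) 1, ∏ i, g (x i) = (∫ t in (0 : ℝ)..1, g t) ^ d := by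
  rw [← Set.pi_univ_Icc, volume_pi, Measure.restrict_pi_pi]
  simp only [Pi.zero_apply, Pi.one_apply]
  rw [integral_fintype_prod_eq_pow, intervalIntegral.integral_of_le zero_le_one,
    integral_Icc_eq_integral_Ioc, Fintype.card_fin]

/-- The derivatives of `Ψ (l • S x)` grow at most like powers of `l`, if those of `Ψ` and `S` are
bounded. -/
lemma exists_norm_iteratedFDeriv_comp_smul_le {E F G : Type*} [NormedAddCommGroup E]
    [NormedSpace ℝ E] [NormedAddCommGroup F] [NormedSpace ℝ F] [NormedAddCommGroup G]
    [NormedSpace ℝ G] {Ψ : F → G} {S : E → F} (hΨ : ContDiff ℝ (⊤ : ℕ∞) Ψ)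
    (hS : ContDiff ℝ (⊤ : ℕ∞) S) (hΨb : ∀ i, ∃ C, ∀ y, ‖iteratedFDeriv ℝ i Ψ y‖ ≤ C)
    (hSb : ∀ i, ∃ C, ∀ x, ‖iteratedFDeriv ℝ i S x‖ ≤ C) (k : ℕ) :
    ∃ C, ∀ l : ℝ, 1 ≤ l → ∀ x, ‖iteratedFDeriv ℝ k (fun x => Ψ (l • S x)) x‖ ≤ C * l ^ k := by
  obtain ⟨A, -, hA⟩ := exists_one_le_bound_of_le hΨb k
  obtain ⟨B, hB1, hB⟩ := exists_one_le_bound_of_le hSb k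
  refine ⟨k.factorial * A * B ^ k, fun l hl x => ?_⟩
  have h := norm_iteratedFDeriv_comp_le (n := k) (f := fun x => l • S x) hΨ (hS.const_smul l)
    (by exact_mod_cast le_top) x (fun i hi => hA i hi _) (D := B * l) fun i hi1 hi => by
      have hSi : ContDiffAt ℝ i S x := hS.contDiffAt.of_le (by exact_mod_cast le_top)
      have hBl : 1 ≤ B * l := one_le_mul_of_one_le_of_one_le hB1 hl
      rw [iteratedFDeriv_const_smul_apply' hSi, norm_smul, Real.norm_of_nonneg (by linarith)]
      calc l * ‖iteratedFDeriv ℝ i S x‖ ≤ l * B := by gcongr; exact hB i hi x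
        _ = (B * l) ^ 1 := by ring
        _ ≤ (B * l) ^ i := pow_le_pow_right₀ hBl hi1
  rwa [mul_pow, ← mul_assoc] at h

/-- Periodic bumps with values in `[0, 1]` and a prescribed mean `t ≤ 3 / 4`, whose derivatives of
order `k` are of size `t ^ (-k / d)`. -/
lemma exists_periodic_bump (d : ℕ) (hd : 1 ≤ d) :
    ∃ φ : ℝ → (Fin d → ℝ) → ℝ,
      (∀ t, 0 < t → t ≤ 3 / 4 → ContDiff ℝ (⊤ : ℕ∞) (φ t) ∧ ZdPeriodic (φ t) ∧
        (∫ x in Set.Icc (0 : Fin d → ℝ) 1, φ t x) = t ∧ (∀ x, 0 ≤ φ t x) ∧ (∀ x, φ t x ≤ 1) ∧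
        (∃ x ∈ Set.Icc (0 : Fin d → ℝ) 1, φ t x = 1) ∧
        (∃ x ∈ Set.Icc (0 : Fin d → ℝ) 1, φ t x = 0)) ∧
      ∀ k : ℕ, ∃ C : ℝ, ∀ t, 0 < t → t ≤ 3 / 4 → ∀ x,
        ‖iteratedFDeriv ℝ k (φ t) x‖ ≤ C * (1 / t ^ (1 / (d : ℝ))) ^ k := by
  have hd0 : (0 : ℝ) < d := by exact_mod_cast hd
  have hd1 : (1 : ℝ) ≤ d := by exact_mod_cast hd
  have hpi := Real.pi_pos
  set δ : ℝ := 1 / (8 * d) with hδ_def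
  have hδ : 0 < δ := by positivity
  have hδ8 : δ ≤ 1 / 8 := by
    rw [hδ_def]; exact one_div_le_one_div_of_le (by norm_num) (by linarith)
  have hcos : 0 < cos (π * δ) :=
    cos_pos_of_mem_Ioo ⟨by nlinarith, by nlinarith⟩
  have hcos1 : cos (π * δ) < 1 := by
    rw [← cos_zero]
    exact cos_lt_cos_of_nonneg_of_le_pi_div_two le_rfl (by nlinarith) (by positivity)
  let b : ContDiffBump (0 : ℝ) := ⟨cos (π * δ), 1, hcos, hcos1⟩
  have hbin : ∀ y, |y| ≤ cos (π * δ) → b y = 1 := fun y hy =>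
    b.one_of_mem_closedBall (by simpa [b] using hy)
  have hbout : ∀ y, 1 ≤ |y| → b y = 0 := fun y hy => b.zero_of_le_dist (by simpa [b] using hy)
  let Ψ : (Fin d → ℝ) → ℝ := fun y => ∏ i, b (y i)
  let S : (Fin d → ℝ) → Fin d → ℝ := fun x i => sin (π * x i)
  have hΨ : ContDiff ℝ (⊤ : ℕ∞) Ψ :=
    contDiff_prod fun i _ => b.contDiff.comp (contDiff_apply ℝ ℝ i)
  have hS : ContDiff ℝ (⊤ : ℕ∞) S :=
    contDiff_pi.2 fun i => contDiff_sin.comp (contDiff_const.mul (contDiff_apply ℝ ℝ i))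
  have hΨc : HasCompactSupport Ψ := by
    refine HasCompactSupport.intro (isCompact_closedBall (0 : Fin d → ℝ) 1) fun y hy => ?_
    rw [mem_closedBall_zero_iff, pi_norm_le_iff_of_nonneg zero_le_one] at hy
    push Not at hy
    obtain ⟨i, hi⟩ := hy
    exact Finset.prod_eq_zero (Finset.mem_univ i) (hbout _ (by simpa using hi.le))
  have hΨb : ∀ i, ∃ C, ∀ y, ‖iteratedFDeriv ℝ i Ψ y‖ ≤ C := fun i =>
    (hΨc.iteratedFDeriv i).exists_bound_of_continuous
      (hΨ.continuous_iteratedFDeriv (by exact_mod_cast le_top))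
  have hSb : ∀ i, ∃ C, ∀ x, ‖iteratedFDeriv ℝ i S x‖ ≤ C :=
    exists_norm_iteratedFDeriv_le_of_periodic hS fun x m => funext fun i => by
      simp only [S, Pi.add_apply]
      rw [← sin_add_int_mul_two_pi (π * x i) (m i)]
      ring_nf
  have hroot : ∀ t : ℝ, 0 < t → t ≤ 3 / 4 → ∃ l, 1 ≤ l ∧ l ≤ 1 / t ^ (1 / (d : ℝ)) ∧
      ∫ x in (0 : ℝ)..1, b (l * sin (π * x)) = t ^ (1 / (d : ℝ)) := fun t ht ht' => by
    refine exists_integral_comp_mul_sin_eq b.continuous (fun _ => b.nonneg) (fun _ => b.le_one)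
      hbin hbout hδ.le (by linarith) (by positivity) ?_
    have hbern := one_add_mul_le_pow (a := -(2 * δ)) (by linarith) d
    have h34 : 1 + (d : ℝ) * -(2 * δ) = 3 / 4 := by rw [hδ_def]; field_simp; norm_num
    have hbase : (0 : ℝ) ≤ 1 - 2 * δ := by linarith
    calc t ^ (1 / (d : ℝ)) ≤ ((1 - 2 * δ) ^ d) ^ (1 / (d : ℝ)) := by
          gcongr
          rw [h34] at hbern
          exact ht'.trans hbern
      _ = 1 - 2 * δ := by rw [one_div, Real.pow_rpow_inv_natCast hbase (by omega)]
  choose! l hl1 hl hint using hroot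
  refine ⟨fun t x => Ψ (l t • S x), fun t ht ht' => ⟨hΨ.comp (hS.const_smul _), ?_, ?_, ?_, ?_, ?_,
    ?_⟩, fun k => ?_⟩
  · intro x m
    refine Finset.prod_congr rfl fun i _ => ?_
    simp only [S, Pi.smul_apply, Pi.add_apply, smul_eq_mul]
    rw [mul_add, mul_comm π (m i : ℝ), sin_add_int_mul_pi]
    rcases Int.even_or_odd (m i) with h | h
    · rw [h.neg_one_zpow, one_mul]
    · rw [h.neg_one_zpow, neg_one_mul, mul_neg, b.neg]
  · refine (integral_unitCube_prod fun u => b (l t * sin (π * u))).trans ?_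
    rw [hint t ht ht', one_div, Real.rpow_inv_natCast_pow ht.le (by omega)]
  · exact fun x => Finset.prod_nonneg fun i _ => b.nonneg
  · exact fun x => Finset.prod_le_one (fun i _ => b.nonneg) fun i _ => b.le_one
  · refine ⟨0, ⟨le_rfl, zero_le_one⟩, Finset.prod_eq_one fun i _ => hbin _ ?_⟩
    simpa [S] using hcos.le
  · refine ⟨fun _ => 1 / 2, ⟨fun i => by norm_num, fun i => by norm_num⟩,
      Finset.prod_eq_zero (Finset.mem_univ ⟨0, hd⟩) (hbout _ ?_)⟩
    simp only [S, Pi.smul_apply, smul_eq_mul, mul_one_div, sin_pi_div_two, mul_one]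
    exact (hl1 t ht ht').trans (le_abs_self _)
  · obtain ⟨C, hC⟩ := exists_norm_iteratedFDeriv_comp_smul_le hΨ hS hΨb hSb k
    have hC0 : 0 ≤ C := by
      simpa using (norm_nonneg _).trans (hC 1 le_rfl 0)
    refine ⟨C, fun t ht ht' x => (hC _ (hl1 t ht ht') x).trans ?_⟩
    have := hl1 t ht ht'
    gcongr
    exact hl t ht ht'

theorem smooth_bump_sequence (d : ℕ) (hd : 1 ≤ d) (Δ : ℝ) (hΔ : 0 < Δ) :
    ∃ f : ℕ → (Fin d → ℝ) → ℝ,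
      (∀ n : ℕ, 1 ≤ n →
        ContDiff ℝ (⊤ : ℕ∞) (f n) ∧ ZdPeriodic (f n) ∧
        -- zero average over [0,1]^d
        (∫ x in Set.Icc (0 : Fin d → ℝ) 1, f n x) = 0 ∧
        -- min over [0,1]^d equals −(Δ + 1/(4n))
        (∀ x ∈ Set.Icc (0 : Fin d → ℝ) 1, -(Δ + 1 / (4 * (n : ℝ))) ≤ f n x) ∧
        (∃ x ∈ Set.Icc (0 : Fin d → ℝ) 1, f n x = -(Δ + 1 / (4 * (n : ℝ)))) ∧
        -- max over [0,1]^d equals 3/(4n)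
        (∀ x ∈ Set.Icc (0 : Fin d → ℝ) 1, f n x ≤ 3 / (4 * (n : ℝ))) ∧
        (∃ x ∈ Set.Icc (0 : Fin d → ℝ) 1, f n x = 3 / (4 * (n : ℝ)))) ∧
      -- C^k bounds: ‖f n‖_{C^k} ≤ C·n^{(k+1)/d}
      (∀ k : ℕ, ∃ C : ℝ, 0 < C ∧ ∀ n : ℕ, 1 ≤ n → ∀ i ≤ k, ∀ x : Fin d → ℝ,
        ‖iteratedFDeriv ℝ i (f n) x‖ ≤ C * (n : ℝ) ^ (((k : ℝ) + 1) / (d : ℝ))) := by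
  obtain ⟨φ, hφ, hφb⟩ := exists_periodic_bump d hd
  let t : ℕ → ℝ := fun n => 3 / (4 * (n * Δ + 1))
  have ht0 : ∀ n, 0 < t n := fun n => by positivity
  have ht : ∀ n, t n ≤ 3 / 4 := fun n => by
    have : (0 : ℝ) ≤ n * Δ := by positivity
    exact div_le_div_of_nonneg_left (by norm_num) (by norm_num) (by linarith)
  refine ⟨fun n x => 3 / (4 * n) - (Δ + 1 / n) * φ (t n) x, fun n hn => ?_, fun k => ?_⟩
  · obtain ⟨hsm, hper, hint, h0, h1, ⟨p, hp, hp1⟩, q, hq, hq0⟩ := hφ (t n) (ht0 n) (ht n)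
    have hn0 : (0 : ℝ) < n := by exact_mod_cast hn
    have hamp : 0 < Δ + 1 / (n : ℝ) := by positivity
    have hmin : 3 / (4 * (n : ℝ)) - (Δ + 1 / n) = -(Δ + 1 / (4 * n)) := by field_simp; ring
    refine ⟨contDiff_const.sub (contDiff_const.mul hsm), fun x m => ?_, ?_, fun x _ => ?_,
      ⟨p, hp, ?_⟩, fun x _ => ?_, q, hq, ?_⟩
    · simp only [hper x m]
    · have hφint : IntegrableOn (φ (t n)) (Set.Icc (0 : Fin d → ℝ) 1) :=
        hsm.continuous.continuousOn.integrableOn_compact isCompact_Icc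
      have hcint : IntegrableOn (fun _ => 3 / (4 * (n : ℝ))) (Set.Icc (0 : Fin d → ℝ) 1) :=
        continuousOn_const.integrableOn_compact isCompact_Icc
      rw [integral_sub hcint (hφint.const_mul _), integral_const_mul, hint, setIntegral_const]
      have hvol : volume.real (Set.Icc (0 : Fin d → ℝ) 1) = 1 := by
        simp [measureReal_def, Real.volume_Icc_pi]
      rw [hvol, one_smul]
      simp only [t]
      field_simp
      ring
    · rw [← hmin]
      nlinarith [h1 x]
    · simp only [hp1, mul_one, hmin]
    · nlinarith [h0 x]
    · simp only [hq0, mul_zero, sub_zero]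
  · obtain ⟨C, hC1, hC⟩ : ∃ C, 1 ≤ C ∧ ∀ i ≤ k, ∀ p : {n : ℕ // 1 ≤ n} × (Fin d → ℝ),
        ‖iteratedFDeriv ℝ i (φ (t p.1)) p.2‖ / (1 / t p.1 ^ (1 / (d : ℝ))) ^ i ≤ C := by
      refine exists_one_le_bound_of_le (fun i => ?_) k
      obtain ⟨C, hC⟩ := hφb i
      refine ⟨C, fun p => ?_⟩
      have := ht0 p.1
      rw [div_le_iff₀ (by positivity)]
      exact hC _ (ht0 _) (ht _) _
    set K : ℝ := (4 * (Δ + 1) / 3) ^ (1 / (d : ℝ)) with hK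
    have hK1 : 1 ≤ K := Real.one_le_rpow (by linarith) (by positivity)
    refine ⟨1 + (Δ + 1) * (C * K ^ k), by positivity, fun n hn i hi x => ?_⟩
    have hn1 : (1 : ℝ) ≤ n := by exact_mod_cast hn
    have hn0 : (0 : ℝ) < n := by linarith
    have htn := ht0 n
    set N : ℝ := (n : ℝ) ^ (((k : ℝ) + 1) / d) with hN
    have hN1 : 1 ≤ N := Real.one_le_rpow hn1 (by positivity)
    have hfreq : 1 / t n ^ (1 / (d : ℝ)) ≤ K * (n : ℝ) ^ (1 / (d : ℝ)) := by
      rw [hK, ← Real.mul_rpow (by positivity) hn0.le, one_div (t n ^ _), ← Real.inv_rpow htn.le]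
      gcongr
      simp only [t, inv_div]
      rw [div_mul_eq_mul_div]
      refine div_le_div_of_nonneg_right ?_ (by norm_num)
      nlinarith
    have hpow : (1 / t n ^ (1 / (d : ℝ))) ^ i ≤ K ^ k * N := by
      calc (1 / t n ^ (1 / (d : ℝ))) ^ i ≤ (K * (n : ℝ) ^ (1 / (d : ℝ))) ^ i := by gcongr
        _ = K ^ i * (n : ℝ) ^ ((i : ℝ) / d) := by
          rw [mul_pow, ← Real.rpow_mul_natCast hn0.le]
          ring_nf
        _ ≤ K ^ k * N := by
          have hik : (i : ℝ) ≤ k + 1 := by exact_mod_cast (by omega : i ≤ k + 1)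
          exact mul_le_mul (pow_le_pow_right₀ hK1 hi)
            (Real.rpow_le_rpow_of_exponent_le hn1 (by gcongr)) (by positivity) (by positivity)
    have hsm := (hφ (t n) (ht0 n) (ht n)).1
    have hsmi : ContDiff ℝ i (φ (t n)) := hsm.of_le (by exact_mod_cast le_top)
    have hφi : ‖iteratedFDeriv ℝ i (φ (t n)) x‖ ≤ C * (K ^ k * N) := by
      have := hC i hi (⟨n, hn⟩, x)
      rw [div_le_iff₀ (by positivity)] at this
      exact this.trans (by gcongr)
    have hconst : ‖iteratedFDeriv ℝ i (fun _ : Fin d → ℝ => 3 / (4 * (n : ℝ))) x‖ ≤ 1 := by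
      rcases Nat.eq_zero_or_pos i with rfl | hi0
      · rw [norm_iteratedFDeriv_zero, Real.norm_of_nonneg (by positivity), div_le_one (by positivity)]
        linarith
      · simp [iteratedFDeriv_const_of_ne hi0.ne']
    have hamp : Δ + 1 / (n : ℝ) ≤ Δ + 1 := by
      have : 1 / (n : ℝ) ≤ 1 := by rw [div_le_one hn0]; exact hn1
      linarith
    have hsub := iteratedFDeriv_sub_apply (x := x) (i := i) (𝕜 := ℝ)
      (f := fun _ : Fin d → ℝ => 3 / (4 * (n : ℝ))) (g := fun y => (Δ + 1 / (n : ℝ)) • φ (t n) y)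
      contDiffAt_const (hsmi.const_smul _).contDiffAt
    calc _ = ‖iteratedFDeriv ℝ i (fun _ : Fin d → ℝ => 3 / (4 * (n : ℝ))) x -
          (Δ + 1 / (n : ℝ)) • iteratedFDeriv ℝ i (φ (t n)) x‖ := by
          rw [← iteratedFDeriv_const_smul_apply' hsmi.contDiffAt, ← hsub]
          rfl
      _ ≤ 1 + (Δ + 1) * (C * (K ^ k * N)) := by
          refine (norm_sub_le _ _).trans (add_le_add hconst ?_)
          rw [norm_smul, Real.norm_of_nonneg (by positivity)]
          gcongr
      _ ≤ (1 + (Δ + 1) * (C * K ^ k)) * N := by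
          linarith
end
end

section
/- Let d≥1, λ∈(0,1), β∈ℝ^d, and let Φ:ℝ^d→ℝ be C² and ℤ^d-periodic. Define T(x) := (1/d)·tr(D²Φ(x)), and set M := max_{x∈[0,1]^d} T(x), m := min_{x∈[0,1]^d} T(x). If the perturbed map F^♭_{λ,β}(x,y)=(x+λ(β+y+DΦ(x)), λ(y+DΦ(x))) admits a C⁰-invariant Lagrangian graph, then m > −(1+λ)/λ and (1 + λm/(1+λ))⁻¹ ≤ max{ (1+λ)/2 + λM/2 + ((1−λ)²/4 + λ²M²/4 + (1+λ)λM/2)^{1/2}, (1/(2λ))·(1+λ+λM+((1+λ+λM)²−4λ)^{1/2}) }. -/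
noncomputable section

open Real

/-- The second partial derivative `∂²f/∂x_i∂x_j`. -/
def secondPartial {d : ℕ} (f : (Fin d → ℝ) → ℝ) (x : Fin d → ℝ) (i j : Fin d) : ℝ :=
  fderiv ℝ (fun y => fderiv ℝ f y (Pi.single j 1)) x (Pi.single i 1)

/-- `F` admits a `C⁰`-invariant Lagrangian graph `L = {(x, Ψ x)}`, where
`Ψ = c + Dη` for a constant vector `c` and a `C¹` `ℤ^d`-periodic function `η`. -/
def HasInvLagGraph {d : ℕ} (F : (Fin d → ℝ) × (Fin d → ℝ) → (Fin d → ℝ) × (Fin d → ℝ)) : Prop :=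
  ∃ (c : Fin d → ℝ) (η : (Fin d → ℝ) → ℝ), ContDiff ℝ 1 η ∧ ZdPeriodic η ∧
    F '' {p | p.2 = c + gradVec η p.1} = {p | p.2 = c + gradVec η p.1}

theorem fderiv_eq_gradVec_dotProduct {d : ℕ} (f : (Fin d → ℝ) → ℝ) (x v : Fin d → ℝ) :
    fderiv ℝ f x v = gradVec f x ⬝ᵥ v := by
  conv_lhs => rw [pi_eq_sum_univ' v, map_sum]
  refine Finset.sum_congr rfl fun i _ => ?_
  rw [map_smul, smul_eq_mul, mul_comm]
  rfl

theorem contDiff_gradVec {d : ℕ} {f : (Fin d → ℝ) → ℝ} {n k : WithTop ℕ∞}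
    (hf : ContDiff ℝ n f) (hk : k + 1 ≤ n) : ContDiff ℝ k (gradVec f) :=
  contDiff_pi.2 fun _ => (hf.fderiv_right hk).clm_apply contDiff_const

theorem gradVec_periodic {d : ℕ} {f : (Fin d → ℝ) → ℝ} (hf : ZdPeriodic f)
    (x : Fin d → ℝ) (n : Fin d → ℤ) : gradVec f (x + fun i => (n i : ℝ)) = gradVec f x := by
  have h : (fun y => f (y + fun i => (n i : ℝ))) = f := funext fun y => hf y n
  ext i
  simp only [gradVec]
  rw [← fderiv_comp_add_right, h]

theorem fderiv_gradVec_periodic {d : ℕ} {f : (Fin d → ℝ) → ℝ} (hf : ZdPeriodic f)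
    (x : Fin d → ℝ) (n : Fin d → ℤ) :
    fderiv ℝ (gradVec f) (x + fun i => (n i : ℝ)) = fderiv ℝ (gradVec f) x := by
  rw [← fderiv_comp_add_right]
  simp only [gradVec_periodic hf]

theorem exists_int_translate_mem_Icc {d : ℕ} (x : Fin d → ℝ) :
    ∃ n : Fin d → ℤ, (x + fun i => (n i : ℝ)) ∈ Set.Icc (0 : Fin d → ℝ) 1 := by
  refine ⟨fun i => -⌊x i⌋, fun i => ?_, fun i => ?_⟩
  · simpa using Int.floor_le (x i)
  · simpa [add_comm] using (Int.lt_floor_add_one (x i)).le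

theorem exists_norm_le_of_continuous_of_periodic {d : ℕ} {E : Type*} [NormedAddCommGroup E]
    {g : (Fin d → ℝ) → E} (hg : Continuous g)
    (hper : ∀ (x : Fin d → ℝ) (n : Fin d → ℤ), g (x + fun i => (n i : ℝ)) = g x) :
    ∃ C, 0 ≤ C ∧ ∀ x, ‖g x‖ ≤ C := by
  obtain ⟨C, hC⟩ := (isCompact_Icc (a := (0 : Fin d → ℝ)) (b := 1)).exists_bound_of_continuousOn
    hg.continuousOn
  refine ⟨C, (norm_nonneg _).trans (hC 0 ⟨le_rfl, zero_le_one⟩), fun x => ?_⟩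
  obtain ⟨n, hn⟩ := exists_int_translate_mem_Icc x
  rw [← hper x n]
  exact hC _ hn

theorem norm_sq_le_dotProduct_self {d : ℕ} (v : Fin d → ℝ) : ‖v‖ ^ 2 ≤ v ⬝ᵥ v := by
  have hnn : 0 ≤ v ⬝ᵥ v := Finset.sum_nonneg fun i _ => mul_self_nonneg _
  have h : ‖v‖ ≤ √(v ⬝ᵥ v) := by
    refine (pi_norm_le_iff_of_nonneg (Real.sqrt_nonneg _)).2 fun i => ?_
    refine Real.le_sqrt_of_sq_le ?_
    rw [Real.norm_eq_abs, sq_abs, sq]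
    exact Finset.single_le_sum (f := fun i => v i * v i) (fun i _ => mul_self_nonneg _)
      (Finset.mem_univ i)
  calc ‖v‖ ^ 2 ≤ √(v ⬝ᵥ v) ^ 2 := by gcongr
    _ = v ⬝ᵥ v := Real.sq_sqrt hnn

theorem abs_dotProduct_le {d : ℕ} (v w : Fin d → ℝ) : |v ⬝ᵥ w| ≤ d * (‖v‖ * ‖w‖) := by
  calc |v ⬝ᵥ w| ≤ ∑ i, |v i * w i| := Finset.abs_sum_le_sum_abs _ _
    _ ≤ ∑ _i : Fin d, ‖v‖ * ‖w‖ := by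
      refine Finset.sum_le_sum fun i _ => ?_
      rw [abs_mul]
      exact mul_le_mul (norm_le_pi_norm v i) (norm_le_pi_norm w i) (abs_nonneg _) (norm_nonneg _)
    _ = d * (‖v‖ * ‖w‖) := by simp

/-- If `id + Dh` is injective for a `C¹` periodic `h`, then `x ↦ |x|²/2 + h x` is convex. -/
theorem le_add_dotProduct_of_injective {d : ℕ} {h : (Fin d → ℝ) → ℝ} (hh : ContDiff ℝ 1 h)
    (hper : ZdPeriodic h) (hinj : Function.Injective fun x => x + gradVec h x)
    (x y : Fin d → ℝ) :
    0 ≤ (y - x) ⬝ᵥ (y - x) / 2 + h y - h x - gradVec h x ⬝ᵥ (y - x) := by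
  set φ : (Fin d → ℝ) → ℝ := fun y =>
    (y - x) ⬝ᵥ (y - x) / 2 + h y - h x - gradVec h x ⬝ᵥ (y - x) with hφ
  have hφx : φ x = 0 := by simp [hφ]
  have hcont : Continuous φ := by
    have := hh.continuous
    simp only [hφ, dotProduct]
    fun_prop
  obtain ⟨C, -, hC⟩ := exists_norm_le_of_continuous_of_periodic hh.continuous hper
  have hlim : ∀ᶠ y in Filter.cocompact (Fin d → ℝ), φ x ≤ φ y := by
    filter_upwards [(tendsto_dist_left_cocompact_atTop x).eventually_ge_atTop
      (2 * (d * ‖gradVec h x‖ + 2 * C + 1)), (tendsto_dist_left_cocompact_atTop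
      x).eventually_ge_atTop 1] with y hy hy1
    rw [dist_comm, dist_eq_norm] at hy hy1
    have h1 := norm_sq_le_dotProduct_self (y - x)
    have h2 := (abs_le.1 (abs_dotProduct_le (gradVec h x) (y - x))).2
    have h3 := abs_le.1 (hC x)
    have h4 := abs_le.1 (hC y)
    have hC0 : 0 ≤ C := (norm_nonneg _).trans (hC x)
    rw [hφx]
    simp only [hφ]
    have : 0 ≤ (‖y - x‖ - 1) * C := mul_nonneg (by linarith) hC0
    nlinarith [mul_le_mul_of_nonneg_left hy (norm_nonneg (y - x))]
  obtain ⟨z, hz⟩ := hcont.exists_forall_le' x hlim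
  have hder : ∀ i, z i - x i + gradVec h z i - gradVec h x i = 0 := by
    intro i
    have hline : HasDerivAt (fun t : ℝ => z + t • (Pi.single i 1 : Fin d → ℝ))
        (Pi.single i 1) 0 := by
      simpa using ((hasDerivAt_id (0 : ℝ)).smul_const (Pi.single i 1 : Fin d → ℝ)).const_add z
    have hh' : HasDerivAt (fun t : ℝ => h (z + t • (Pi.single i 1 : Fin d → ℝ)))
        (gradVec h z i) 0 := by
      have hz0 : HasFDerivAt h (fderiv ℝ h z) (z + (0 : ℝ) • (Pi.single i 1 : Fin d → ℝ)) := by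
        simpa using (hh.differentiable one_ne_zero z).hasFDerivAt
      exact hz0.comp_hasDerivAt 0 hline
    have heq : (fun t : ℝ => φ (z + t • (Pi.single i 1 : Fin d → ℝ))) = fun t : ℝ =>
        ((z - x) ⬝ᵥ (z - x) + 2 * t * (z i - x i) + t ^ 2) / 2 +
          h (z + t • (Pi.single i 1 : Fin d → ℝ)) - h x -
          (gradVec h x ⬝ᵥ (z - x) + t * gradVec h x i) := by
      funext t
      simp only [hφ]
      rw [add_sub_right_comm]
      simp [dotProduct_add, add_dotProduct, smul_dotProduct, dotProduct_smul]
      ring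
    have hd : HasDerivAt (fun t : ℝ => φ (z + t • (Pi.single i 1 : Fin d → ℝ)))
        (z i - x i + gradVec h z i - gradVec h x i) 0 := by
      rw [heq]
      refine HasDerivAt.congr_deriv ((((((((hasDerivAt_id (0 : ℝ)).const_mul 2).mul_const
        (z i - x i)).const_add ((z - x) ⬝ᵥ (z - x))).add
        ((hasDerivAt_id (0 : ℝ)).pow 2)).div_const 2).add hh').sub_const (h x) |>.sub
        (((hasDerivAt_id (0 : ℝ)).mul_const (gradVec h x i)).const_add
          (gradVec h x ⬝ᵥ (z - x)))) ?_
      simp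
    refine IsLocalMin.hasDerivAt_eq_zero (Filter.Eventually.of_forall fun t => ?_) hd
    simpa using hz _
  have hzx : z = x := hinj (funext fun i => by have := hder i; simp; linarith)
  have := hz y
  rwa [hzx, hφx] at this

/-- A function with a two-sided quadratic Taylor bound has a Lipschitz gradient. -/
theorem norm_gradVec_sub_le {d : ℕ} {h : (Fin d → ℝ) → ℝ} {C : ℝ} (hC : 0 ≤ C)
    (H : ∀ x y, |h y - h x - gradVec h x ⬝ᵥ (y - x)| ≤ C * ‖y - x‖ ^ 2) (x y : Fin d → ℝ) :
    ‖gradVec h x - gradVec h y‖ ≤ 6 * C * ‖x - y‖ := by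
  rcases eq_or_ne x y with rfl | hxy
  · simp
  have ht : 0 < ‖x - y‖ := norm_pos_iff.2 (sub_ne_zero.2 hxy)
  set t := ‖x - y‖ with ht'
  refine (pi_norm_le_iff_of_nonneg (by positivity)).2 fun i => ?_
  set e : Fin d → ℝ := t • Pi.single i 1 with he
  have hen : ‖e‖ = t := by simp [he, norm_smul, abs_of_pos ht, Pi.norm_single]
  have hyx : ‖y - x‖ = t := norm_sub_rev y x
  have hzx : ‖e + (y - x)‖ ≤ 2 * t := (norm_add_le _ _).trans (by linarith)
  have h1 := H x (y + e)
  have h2 := H y (y + e)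
  have h3 := H x y
  rw [show y + e - x = e + (y - x) by abel] at h1
  rw [add_sub_cancel_left, hen] at h2
  rw [hyx] at h3
  rw [dotProduct_add] at h1
  have hd : ∀ v : Fin d → ℝ, v ⬝ᵥ e = t * v i := fun v => by simp [he]
  rw [hd] at h1 h2
  have h4 : C * ‖e + (y - x)‖ ^ 2 ≤ C * (2 * t) ^ 2 := by gcongr
  have h5 := abs_le.1 (h1.trans h4)
  have h2 := abs_le.1 h2
  have h3 := abs_le.1 h3
  rw [Real.norm_eq_abs, Pi.sub_apply]
  refine le_of_mul_le_mul_left ?_ ht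
  rw [← abs_of_pos ht, ← abs_mul, abs_of_pos ht]
  refine abs_le.2 ⟨by nlinarith [h5.1, h5.2, h2.1, h2.2, h3.1, h3.2],
    by nlinarith [h5.1, h5.2, h2.1, h2.2, h3.1, h3.2]⟩

theorem exists_abs_taylor_le {d : ℕ} {Φ : (Fin d → ℝ) → ℝ} (hΦ : ContDiff ℝ 2 Φ)
    (hper : ZdPeriodic Φ) :
    ∃ C, 0 ≤ C ∧ ∀ x y, |Φ y - Φ x - gradVec Φ x ⬝ᵥ (y - x)| ≤ C * ‖y - x‖ ^ 2 := by
  have hp1 : ∀ (x : Fin d → ℝ) (n : Fin d → ℤ),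
      fderiv ℝ Φ (x + fun i => (n i : ℝ)) = fderiv ℝ Φ x := fun x n => by
    rw [← fderiv_comp_add_right, show (fun y => Φ (y + fun i => (n i : ℝ))) = Φ from
      funext fun y => hper y n]
  have hp2 : ∀ (x : Fin d → ℝ) (n : Fin d → ℤ),
      fderiv ℝ (fderiv ℝ Φ) (x + fun i => (n i : ℝ)) = fderiv ℝ (fderiv ℝ Φ) x := fun x n => by
    rw [← fderiv_comp_add_right, show (fun y => fderiv ℝ Φ (y + fun i => (n i : ℝ))) =
      fderiv ℝ Φ from funext fun y => hp1 y n]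
  have hc1 : ContDiff ℝ 1 (fderiv ℝ Φ) := hΦ.fderiv_right (by norm_num)
  obtain ⟨C, hC0, hC⟩ := exists_norm_le_of_continuous_of_periodic
    (hc1.continuous_fderiv one_ne_zero) hp2
  refine ⟨C, hC0, fun x y => ?_⟩
  have hb : ∀ z ∈ Metric.closedBall x ‖y - x‖, ‖fderiv ℝ Φ z - fderiv ℝ Φ x‖ ≤ C * ‖y - x‖ := by
    intro z hz
    have := convex_univ.norm_image_sub_le_of_norm_fderiv_le (𝕜 := ℝ) (f := fderiv ℝ Φ)
      (fun w _ => hc1.differentiable one_ne_zero w) (fun w _ => hC w) (Set.mem_univ x)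
      (Set.mem_univ z)
    refine this.trans ?_
    gcongr
    rwa [← dist_eq_norm]
  have := (convex_closedBall x ‖y - x‖).norm_image_sub_le_of_norm_fderiv_le' (𝕜 := ℝ) (f := Φ)
    (fun w _ => hΦ.differentiable two_ne_zero w) hb (Metric.mem_closedBall_self (norm_nonneg _))
    (by rw [Metric.mem_closedBall, dist_eq_norm])
  rw [fderiv_eq_gradVec_dotProduct, Real.norm_eq_abs] at this
  rw [sq, ← mul_assoc]
  exact this

/-- The trace of an endomorphism of `ℝ^d`, computed in the standard basis. -/
def stdTrace {d : ℕ} (A : (Fin d → ℝ) →L[ℝ] (Fin d → ℝ)) : ℝ :=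
  ∑ i, A (Pi.single i 1) i

theorem stdTrace_quadratic_nonneg {d : ℕ} {A B : (Fin d → ℝ) →L[ℝ] (Fin d → ℝ)}
    (hsymm : ∀ v w, B v ⬝ᵥ w = v ⬝ᵥ B w) (hpos : ∀ v, 0 ≤ B v ⬝ᵥ v) (hBA : ∀ v, B (A v) = v)
    (t : ℝ) : 0 ≤ stdTrace B - 2 * t * d + t ^ 2 * stdTrace A := by
  have h : ∀ i, 0 ≤ B (Pi.single i 1) i - 2 * t * 1 + t ^ 2 * A (Pi.single i 1) i := by
    intro i
    have := hpos (Pi.single i 1 - t • A (Pi.single i 1))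
    simp only [map_sub, map_smul, hBA, sub_dotProduct, dotProduct_sub, smul_dotProduct,
      dotProduct_smul, hsymm (Pi.single i 1) (A _), smul_eq_mul, single_dotProduct,
      dotProduct_single, Pi.single_eq_same, Pi.sub_apply, Pi.smul_apply] at this
    linarith
  have := Finset.sum_nonneg fun i (_ : i ∈ Finset.univ) => h i
  rw [Finset.sum_add_distrib, Finset.sum_sub_distrib, ← Finset.mul_sum, ← Finset.mul_sum] at this
  simpa [stdTrace] using this

/-- The Hessian is symmetric wherever the gradient of a `C¹` function is differentiable. -/
theorem fderiv_gradVec_dotProduct_comm {d : ℕ} {h : (Fin d → ℝ) → ℝ} (hh : Differentiable ℝ h)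
    {x : Fin d → ℝ} (hx : DifferentiableAt ℝ (gradVec h) x) (v w : Fin d → ℝ) :
    fderiv ℝ (gradVec h) x v ⬝ᵥ w = v ⬝ᵥ fderiv ℝ (gradVec h) x w := by
  have heq : fderiv ℝ h = fun y => ∑ i, gradVec h y i •
      (ContinuousLinearMap.proj i : (Fin d → ℝ) →L[ℝ] ℝ) := by
    funext y
    ext1 u
    simp [fderiv_eq_gradVec_dotProduct, dotProduct]
  have hd : HasFDerivAt (fderiv ℝ h) (∑ i, ((ContinuousLinearMap.proj i).comp
      (fderiv ℝ (gradVec h) x)).smulRight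
      (ContinuousLinearMap.proj i : (Fin d → ℝ) →L[ℝ] ℝ)) x := by
    rw [heq]
    exact HasFDerivAt.fun_sum fun i _ => ((hasFDerivAt_pi'.1 hx.hasFDerivAt) i).smul_const
      (ContinuousLinearMap.proj i : (Fin d → ℝ) →L[ℝ] ℝ)
  have := second_derivative_symmetric (fun y => (hh y).hasFDerivAt) hd v w
  simp only [sum_apply, ContinuousLinearMap.smulRight_apply,
    smul_apply, ContinuousLinearMap.comp_apply,
    ContinuousLinearMap.proj_apply, smul_eq_mul] at this
  rw [dotProduct_comm v]
  exact this

theorem fderiv_dotProduct_nonneg_of_monotone {d : ℕ} {G : (Fin d → ℝ) → (Fin d → ℝ)}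
    (hG : ∀ x y, 0 ≤ (G x - G y) ⬝ᵥ (x - y)) {x : Fin d → ℝ} (hx : DifferentiableAt ℝ G x)
    (v : Fin d → ℝ) : 0 ≤ fderiv ℝ G x v ⬝ᵥ v := by
  have hline : HasDerivAt (fun t : ℝ => x + t • v) v 0 := by
    simpa using ((hasDerivAt_id (0 : ℝ)).smul_const v).const_add x
  have hx0 : HasFDerivAt G (fderiv ℝ G x) (x + (0 : ℝ) • v) := by simpa using hx.hasFDerivAt
  have hcomp := hasDerivAt_pi.1 (hx0.comp_hasDerivAt (0 : ℝ) hline)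
  have hd : HasDerivAt (fun t : ℝ => G (x + t • v) ⬝ᵥ v) (fderiv ℝ G x v ⬝ᵥ v) 0 :=
    HasDerivAt.fun_sum fun i _ => (hcomp i).mul_const (v i)
  have hmono : Monotone fun t : ℝ => G (x + t • v) ⬝ᵥ v := by
    intro s t hst
    rcases hst.eq_or_lt with rfl | hlt
    · rfl
    have := hG (x + t • v) (x + s • v)
    rw [show x + t • v - (x + s • v) = (t - s) • v by module, dotProduct_smul, smul_eq_mul,
      sub_dotProduct] at this
    have := nonneg_of_mul_nonneg_right this (sub_pos.2 hlt)
    simpa using this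
  rw [← hd.deriv]
  exact hmono.deriv_nonneg

theorem differentiableAt_of_lipschitz_inverse {E : Type*} [NormedAddCommGroup E] [NormedSpace ℝ E]
    [FiniteDimensional ℝ E] {f g : E → E} (hfg : Function.RightInverse g f)
    (hgf : Function.LeftInverse g f) {K : NNReal} (hg : LipschitzWith K g) {x : E}
    (hf : DifferentiableAt ℝ f x) : DifferentiableAt ℝ g (f x) := by
  have hinj : Function.Injective (fderiv ℝ f x) := by
    rw [injective_iff_map_eq_zero]
    intro v hv
    have hline : HasDerivAt (fun t : ℝ => x + t • v) v 0 := by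
      simpa using ((hasDerivAt_id (0 : ℝ)).smul_const v).const_add x
    have hx0 : HasFDerivAt f (fderiv ℝ f x) (x + (0 : ℝ) • v) := by simpa using hf.hasFDerivAt
    have hcomp := hx0.comp_hasDerivAt (0 : ℝ) hline
    rw [hv, hasDerivAt_iff_isLittleO] at hcomp
    have hzero : HasDerivAt (fun t : ℝ => x + t • v) 0 0 := by
      rw [hasDerivAt_iff_isLittleO]
      refine Asymptotics.IsBigO.trans_isLittleO (Asymptotics.IsBigO.of_bound K
        (Filter.Eventually.of_forall fun t => ?_)) hcomp
      simpa [hgf _, dist_eq_norm] using hg.dist_le_mul (f (x + t • v)) (f x)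
    exact hline.unique hzero
  let e : E ≃L[ℝ] E :=
    (LinearEquiv.ofInjectiveEndo (fderiv ℝ f x : E →ₗ[ℝ] E) hinj).toContinuousLinearEquiv
  have he : HasFDerivAt f (e : E →L[ℝ] E) (g (f x)) := by
    rw [hgf x]
    exact hf.hasFDerivAt.congr_fderiv (ContinuousLinearMap.ext fun v => rfl)
  exact (HasFDerivAt.of_local_left_inverse hg.continuous.continuousAt he
    (Filter.Eventually.of_forall hfg)).differentiableAt

/-- If every element `p` of a bounded set of positive reals satisfies `p ≤ K - μ / q` for some
`q` in the set, then the set lies below the larger root of `X² - K X + μ`. -/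
theorem le_root_of_forall_exists_le {s : Set ℝ} {K μ : ℝ} (hμ : 0 < μ) (hpos : ∀ p ∈ s, 0 < p)
    (hbdd : BddAbove s) (hs : ∀ p ∈ s, ∃ q ∈ s, p ≤ K - μ / q) {p : ℝ} (hp : p ∈ s) :
    p ≤ (K + √(K ^ 2 - 4 * μ)) / 2 := by
  have hle : ∀ q ∈ s, q ≤ sSup s := fun q hq => le_csSup hbdd hq
  have hS : 0 < sSup s := (hpos p hp).trans_le (hle p hp)
  have h1 : sSup s ≤ K - μ / sSup s := by
    refine csSup_le ⟨p, hp⟩ fun r hr => ?_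
    obtain ⟨q, hq, hrq⟩ := hs r hr
    have : μ / sSup s ≤ μ / q := div_le_div_of_nonneg_left hμ.le (hpos q hq) (hle q hq)
    linarith
  have h2 : sSup s * sSup s ≤ K * sSup s - μ := by
    have := mul_le_mul_of_nonneg_right h1 hS.le
    rwa [sub_mul, div_mul_cancel₀ _ hS.ne'] at this
  have h3 : 2 * sSup s - K ≤ √(K ^ 2 - 4 * μ) := Real.le_sqrt_of_sq_le (by nlinarith)
  linarith [hle p hp]

theorem pos_and_one_div_le_of_quadratic_nonneg {a b : ℝ}
    (h : ∀ t : ℝ, 0 ≤ b - 2 * t + t ^ 2 * a) : 0 < a ∧ 1 / a ≤ b := by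
  have ha : 0 < a := by
    by_contra! ha
    have h1 := h (|b| + 1)
    have h2 : (|b| + 1) ^ 2 * a ≤ 0 := mul_nonpos_of_nonneg_of_nonpos (sq_nonneg _) ha
    linarith [le_abs_self b, abs_nonneg b]
  refine ⟨ha, ?_⟩
  have h1 := h (1 / a)
  have h2 : (1 / a) ^ 2 * a = 1 / a := by field_simp
  linarith

/-- Uniform lower bounds along the orbits of a bijection `f` with inverse `g`, for functions with
`1 / a ≤ b ∘ f` and `a + μ b ≤ K`. -/
theorem root_div_le_of_orbit_bounds {X : Type*} {E : Set X} {f g : X → X} {a b : X → ℝ} {μ K : ℝ}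
    (hμ : 0 < μ) (hfg : Function.RightInverse g f) (hfE : ∀ x ∈ E, f x ∈ E)
    (hgE : ∀ x ∈ E, g x ∈ E) (hab : ∀ x ∈ E, 0 < a x ∧ 1 / a x ≤ b (f x))
    (hsum : ∀ x ∈ E, a x + μ * b x ≤ K) {x : X} (hx : x ∈ E) :
    0 < (K + √(K ^ 2 - 4 * μ)) / 2 ∧ μ / ((K + √(K ^ 2 - 4 * μ)) / 2) ≤ a x ∧
      1 / ((K + √(K ^ 2 - 4 * μ)) / 2) ≤ b x := by
  have hb' : ∀ y ∈ E, 1 / a (g y) ≤ b y := fun y hy => by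
    simpa only [hfg y] using (hab _ (hgE y hy)).2
  have hb : ∀ y ∈ E, 0 < b y := fun y hy =>
    (one_div_pos.2 (hab _ (hgE y hy)).1).trans_le (hb' y hy)
  have hSa : ∀ y ∈ E, a y ≤ (K + √(K ^ 2 - 4 * μ)) / 2 := by
    intro y hy
    refine le_root_of_forall_exists_le (s := a '' E) hμ ?_ ⟨K, ?_⟩ ?_ ⟨y, hy, rfl⟩
    · rintro _ ⟨z, hz, rfl⟩
      exact (hab z hz).1
    · rintro _ ⟨z, hz, rfl⟩
      linarith [hsum z hz, mul_pos hμ (hb z hz)]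
    · rintro _ ⟨z, hz, rfl⟩
      refine ⟨_, ⟨g z, hgE z hz, rfl⟩, ?_⟩
      have := mul_le_mul_of_nonneg_left (hb' z hz) hμ.le
      rw [mul_one_div] at this
      linarith [hsum z hz]
  have hSb : ∀ y ∈ E, μ * b y ≤ (K + √(K ^ 2 - 4 * μ)) / 2 := by
    intro y hy
    refine le_root_of_forall_exists_le (s := (fun z => μ * b z) '' E) hμ ?_ ⟨K, ?_⟩ ?_
      ⟨y, hy, rfl⟩
    · rintro _ ⟨z, hz, rfl⟩
      exact mul_pos hμ (hb z hz)
    · rintro _ ⟨z, hz, rfl⟩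
      show μ * b z ≤ K
      linarith [hsum z hz, (hab z hz).1]
    · rintro _ ⟨z, hz, rfl⟩
      refine ⟨_, ⟨f z, hfE z hz, rfl⟩, ?_⟩
      have h1 : μ / (μ * b (f z)) = 1 / b (f z) := by
        rw [← mul_one_div, mul_one_div, div_mul_cancel_left₀ hμ.ne', one_div]
      have h2 : 1 / b (f z) ≤ a z :=
        (one_div_le (hab z hz).1 (hb _ (hfE z hz))).1 (hab z hz).2
      show μ * b z ≤ K - μ / (μ * b (f z))
      rw [h1]
      linarith [hsum z hz]
  have hΛ := (hab x hx).1.trans_le (hSa x hx)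
  refine ⟨hΛ, ?_, ?_⟩
  · have h2 : 1 / b (f x) ≤ a x := (one_div_le (hab x hx).1 (hb _ (hfE x hx))).1 (hab x hx).2
    refine le_trans ?_ h2
    rw [div_le_div_iff₀ hΛ (hb _ (hfE x hx)), one_mul]
    exact hSb _ (hfE x hx)
  · exact (one_div_le_one_div_of_le (hab _ (hgE x hx)).1 (hSa _ (hgE x hx))).trans (hb' x hx)

theorem exists_lipschitzWith_gradVec {d : ℕ} {h : (Fin d → ℝ) → ℝ} {C : ℝ} (hC : 0 ≤ C)
    (H : ∀ x y, |h y - h x - gradVec h x ⬝ᵥ (y - x)| ≤ C * ‖y - x‖ ^ 2) :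
    ∃ K, LipschitzWith K (gradVec h) :=
  ⟨⟨6 * C, by positivity⟩, LipschitzWith.of_dist_le_mul fun x y => by
    rw [dist_eq_norm, dist_eq_norm]
    exact norm_gradVec_sub_le hC H x y⟩

theorem gradVec_neg {d : ℕ} (h : (Fin d → ℝ) → ℝ) (x : Fin d → ℝ) :
    gradVec (fun y => -h y) x = -gradVec h x := by
  ext i
  simp [gradVec, fderiv_fun_neg]

theorem gradVec_const_mul_add {d : ℕ} {h k : (Fin d → ℝ) → ℝ} (hh : Differentiable ℝ h)
    (hk : Differentiable ℝ k) (r : ℝ) (x : Fin d → ℝ) :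
    gradVec (fun y => r * (h y + k y)) x = r • (gradVec h x + gradVec k x) := by
  ext i
  simp [gradVec, fderiv_const_mul ((hh x).fun_add (hk x)), fderiv_fun_add (hh x) (hk x)]
  ring

/-- If both `id + r D(η + Φ)` and `id - Dη` are injective and `Φ` is `C²`, then `η` has
a two-sided quadratic Taylor bound. -/
theorem exists_abs_taylor_le_of_injective {d : ℕ} {η Φ : (Fin d → ℝ) → ℝ} {r : ℝ} (hr : 0 < r)
    (hη : ContDiff ℝ 1 η) (hηper : ZdPeriodic η) (hΦ : ContDiff ℝ 2 Φ) (hΦper : ZdPeriodic Φ)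
    (hinj₁ : Function.Injective fun x => x + r • (gradVec η x + gradVec Φ x))
    (hinj₂ : Function.Injective fun x => x - gradVec η x) :
    ∃ C, 0 ≤ C ∧ ∀ x y, |η y - η x - gradVec η x ⬝ᵥ (y - x)| ≤ C * ‖y - x‖ ^ 2 := by
  obtain ⟨C, hC0, hC⟩ := exists_abs_taylor_le hΦ hΦper
  have hd1 := hη.differentiable one_ne_zero
  have hd2 := hΦ.differentiable two_ne_zero
  refine ⟨d / r + C + d, by positivity, fun x y => ?_⟩
  have h1 := le_add_dotProduct_of_injective (h := fun y => -η y) hη.neg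
    (fun x n => by simp only [hηper x n]) (by simpa only [gradVec_neg, ← sub_eq_add_neg] using hinj₂) x y
  have h2 := le_add_dotProduct_of_injective (h := fun y => r * (η y + Φ y))
    (contDiff_const.mul (hη.add (hΦ.of_le one_le_two)))
    (fun x n => by simp only [hηper x n, hΦper x n])
    (by simpa only [gradVec_const_mul_add hd1 hd2] using hinj₁) x y
  rw [gradVec_neg, neg_dotProduct] at h1
  rw [gradVec_const_mul_add hd1 hd2, smul_dotProduct, add_dotProduct, smul_eq_mul] at h2
  have h3 := abs_le.1 (hC x y)
  have h4 := (abs_le.1 (abs_dotProduct_le (y - x) (y - x))).2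
  rw [← sq] at h4
  have h5 : (y - x) ⬝ᵥ (y - x) / r ≤ d / r * ‖y - x‖ ^ 2 := by
    rw [div_mul_eq_mul_div]
    gcongr
  have h6 : 0 ≤ (y - x) ⬝ᵥ (y - x) / r / 2 + (η y - η x - gradVec η x ⬝ᵥ (y - x)) +
      (Φ y - Φ x - gradVec Φ x ⬝ᵥ (y - x)) := by
    have := div_nonneg h2 hr.le
    refine this.trans_eq ?_
    field_simp
    ring
  have h7 : 0 ≤ (d : ℝ) / r * ‖y - x‖ ^ 2 := by positivity
  have h8 : 0 ≤ (d : ℝ) * ‖y - x‖ ^ 2 := by positivity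
  have h9 : 0 ≤ C * ‖y - x‖ ^ 2 := by positivity
  exact abs_le.2 ⟨by linarith, by linarith⟩

theorem secondPartial_eq_fderiv_gradVec {d : ℕ} {Φ : (Fin d → ℝ) → ℝ} (hΦ : ContDiff ℝ 2 Φ)
    (x : Fin d → ℝ) (i j : Fin d) :
    secondPartial Φ x i j = fderiv ℝ (gradVec Φ) x (Pi.single i 1) j := by
  have h : DifferentiableAt ℝ (gradVec Φ) x :=
    (contDiff_gradVec (k := 1) hΦ (by norm_num)).differentiable one_ne_zero x
  have := (hasFDerivAt_pi'.1 h.hasFDerivAt j).fderiv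
  exact congrArg (fun L : (Fin d → ℝ) →L[ℝ] ℝ => L (Pi.single i 1)) this

theorem sub_gradVec_monotone {d : ℕ} {η : (Fin d → ℝ) → ℝ} (hη : ContDiff ℝ 1 η)
    (hηper : ZdPeriodic η) (hinj : Function.Injective fun x => x - gradVec η x)
    (x y : Fin d → ℝ) : 0 ≤ (x - gradVec η x - (y - gradVec η y)) ⬝ᵥ (x - y) := by
  have h : ∀ x y, _ := le_add_dotProduct_of_injective (h := fun y => -η y) hη.neg
    (fun x n => by simp only [hηper x n]) (by simpa only [gradVec_neg, ← sub_eq_add_neg] using hinj)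
  have h1 := h x y
  have h2 := h y x
  simp only [gradVec_neg, neg_dotProduct, sub_dotProduct, dotProduct_sub] at h1 h2 ⊢
  linarith [dotProduct_comm x y]

theorem criterion_dimd (d : ℕ) (hd : 1 ≤ d) (lam : ℝ) (hlam : lam ∈ Set.Ioo (0 : ℝ) 1)
    (β : Fin d → ℝ) (Φ : (Fin d → ℝ) → ℝ) (hΦ : ContDiff ℝ 2 Φ) (hΦper : ZdPeriodic Φ)
    (T : (Fin d → ℝ) → ℝ) (hT : ∀ x, T x = (1 / (d : ℝ)) * ∑ i, secondPartial Φ x i i)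
    (M m : ℝ)
    -- M = max_{[0,1]^d} T and m = min_{[0,1]^d} T
    (hM₁ : ∀ x ∈ Set.Icc (0 : Fin d → ℝ) 1, T x ≤ M)
    (hM₂ : ∃ x ∈ Set.Icc (0 : Fin d → ℝ) 1, T x = M)
    (hm₁ : ∀ x ∈ Set.Icc (0 : Fin d → ℝ) 1, m ≤ T x)
    (hm₂ : ∃ x ∈ Set.Icc (0 : Fin d → ℝ) 1, T x = m)
    (hinv : HasInvLagGraph (fun p : (Fin d → ℝ) × (Fin d → ℝ) =>
      (p.1 + lam • (β + p.2 + gradVec Φ p.1), lam • (p.2 + gradVec Φ p.1)))) :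
    -(1 + lam) / lam < m ∧
      (1 + lam * m / (1 + lam))⁻¹ ≤
        max ((1 + lam) / 2 + lam * M / 2 +
              Real.sqrt ((1 - lam) ^ 2 / 4 + lam ^ 2 * M ^ 2 / 4 + (1 + lam) * lam * M / 2))
          ((1 / (2 * lam)) *
            (1 + lam + lam * M + Real.sqrt ((1 + lam + lam * M) ^ 2 - 4 * lam))) := by
  obtain ⟨h0, h1⟩ := hlam
  obtain ⟨c, η, hη, hηper, hF⟩ := hinv
  have hdpos : (0 : ℝ) < d := by exact_mod_cast hd
  set Ψ : (Fin d → ℝ) → (Fin d → ℝ) := fun x => c + gradVec η x with hΨ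
  set f : (Fin d → ℝ) → (Fin d → ℝ) := fun x => x + lam • (β + Ψ x + gradVec Φ x) with hf
  set g : (Fin d → ℝ) → (Fin d → ℝ) := fun x => x - Ψ x - lam • β with hg
  have hinvar : ∀ x, Ψ (f x) = lam • (Ψ x + gradVec Φ x) := by
    intro x
    have : (f x, lam • (Ψ x + gradVec Φ x)) ∈
        {p : (Fin d → ℝ) × (Fin d → ℝ) | p.2 = c + gradVec η p.1} := by
      rw [← hF]
      exact ⟨(x, Ψ x), rfl, rfl⟩
    exact this.symm
  have hgf : Function.LeftInverse g f := by
    intro x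
    simp only [hg, hinvar]
    simp only [hf]
    module
  have hfg : Function.RightInverse g f := by
    intro z
    have : (z, Ψ z) ∈ {p : (Fin d → ℝ) × (Fin d → ℝ) | p.2 = c + gradVec η p.1} := rfl
    rw [← hF] at this
    obtain ⟨⟨x, y⟩, hxy, hz⟩ := this
    have hy : y = Ψ x := hxy
    have hfx : f x = z := by
      rw [hy] at hz
      exact congrArg Prod.fst hz
    rw [← hfx, hgf x]
  have hinj₁ : Function.Injective fun x => x + lam • (gradVec η x + gradVec Φ x) := by
    intro x y hxy
    apply hgf.injective
    simp only at hxy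
    calc f x = x + lam • (gradVec η x + gradVec Φ x) + lam • (β + c) := by
          simp only [hf, hΨ]; module
      _ = f y := by rw [hxy]; simp only [hf, hΨ]; module
  have hinj₂ : Function.Injective fun x => x - gradVec η x := by
    intro x y hxy
    apply hfg.injective
    simp only at hxy
    calc g x = x - gradVec η x - (c + lam • β) := by simp only [hg, hΨ]; module
      _ = g y := by rw [hxy]; simp only [hg, hΨ]; module
  have hΦ1 : ContDiff ℝ 1 (gradVec Φ) := contDiff_gradVec hΦ (by norm_num)
  have hΦd : Differentiable ℝ (gradVec Φ) := hΦ1.differentiable one_ne_zero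
  obtain ⟨C₁, hC₁, hT₁⟩ := exists_abs_taylor_le_of_injective h0 hη hηper hΦ hΦper hinj₁ hinj₂
  obtain ⟨C₂, hC₂, hT₂⟩ := exists_abs_taylor_le hΦ hΦper
  obtain ⟨K₁, hK₁⟩ := exists_lipschitzWith_gradVec hC₁ hT₁
  obtain ⟨K₂, hK₂⟩ := exists_lipschitzWith_gradVec hC₂ hT₂
  have hΨL := (LipschitzWith.const c).add hK₁
  have hfL := LipschitzWith.id.add ((lipschitzWith_smul lam).comp
    (((LipschitzWith.const β).add hΨL).add hK₂))
  have hgL := (LipschitzWith.id.sub hΨL).sub (LipschitzWith.const (lam • β))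
  set E : Set (Fin d → ℝ) := {x | DifferentiableAt ℝ (gradVec η) x} with hE
  have hEdense : Dense E :=
    MeasureTheory.Measure.dense_of_ae (hK₁.ae_differentiableAt (μ := MeasureTheory.volume))
  have hfd : ∀ x ∈ E, HasFDerivAt f (ContinuousLinearMap.id ℝ _ +
      lam • (fderiv ℝ (gradVec η) x + fderiv ℝ (gradVec Φ) x)) x := fun x hx =>
    (hasFDerivAt_id x).add ((((hx.hasFDerivAt.const_add c).const_add β).add
      (hΦd x).hasFDerivAt).const_smul lam)
  have hgd : ∀ x ∈ E, HasFDerivAt g (ContinuousLinearMap.id ℝ _ -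
      fderiv ℝ (gradVec η) x) x := fun x hx =>
    ((hasFDerivAt_id x).sub (hx.hasFDerivAt.const_add c)).sub_const _
  have hfE : ∀ x ∈ E, f x ∈ E := by
    intro x hx
    have hgx : DifferentiableAt ℝ g (f x) :=
      differentiableAt_of_lipschitz_inverse hfg hgf hgL (hfd x hx).differentiableAt
    have heq : gradVec η = fun z => z - g z - (c + lam • β) := by
      funext z
      simp only [hg, hΨ]
      module
    show DifferentiableAt ℝ (gradVec η) (f x)
    rw [heq]
    exact (differentiableAt_id.sub hgx).sub_const _
  have hgE : ∀ x ∈ E, g x ∈ E := by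
    intro x hx
    have hfx : DifferentiableAt ℝ f (g x) :=
      differentiableAt_of_lipschitz_inverse hgf hfg hfL (hgd x hx).differentiableAt
    have heq : gradVec η = fun z => lam⁻¹ • (f z - z) - gradVec Φ z - (c + β) := by
      funext z
      simp only [hf, hΨ, add_sub_cancel_left, inv_smul_smul₀ h0.ne']
      module
    show DifferentiableAt ℝ (gradVec η) (g x)
    rw [heq]
    exact (((hfx.sub differentiableAt_id).const_smul lam⁻¹).sub (hΦd (g x))).sub_const _
  have htrf : ∀ x ∈ E, stdTrace (fderiv ℝ f x) = d + lam * (stdTrace (fderiv ℝ (gradVec η) x) +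
      stdTrace (fderiv ℝ (gradVec Φ) x)) := fun x hx => by
    rw [(hfd x hx).fderiv]
    simp [stdTrace, Finset.sum_add_distrib, Finset.mul_sum, mul_add]
  have htrg : ∀ x ∈ E, stdTrace (fderiv ℝ g x) = d - stdTrace (fderiv ℝ (gradVec η) x) :=
    fun x hx => by
    rw [(hgd x hx).fderiv]
    simp [stdTrace, Finset.sum_sub_distrib]
  have hTtr : ∀ x, T x = stdTrace (fderiv ℝ (gradVec Φ) x) / d := fun x => by
    rw [hT, one_div_mul_eq_div]
    simp only [secondPartial_eq_fderiv_gradVec hΦ, stdTrace]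
  have hTM : ∀ x, T x ≤ M := fun x => by
    obtain ⟨n, hn⟩ := exists_int_translate_mem_Icc x
    have := hM₁ _ hn
    rwa [hTtr, fderiv_gradVec_periodic hΦper, ← hTtr] at this
  have hTcont : Continuous T := by
    have := hΦ1.continuous_fderiv one_ne_zero
    rw [funext hTtr]
    unfold stdTrace
    fun_prop
  set a : (Fin d → ℝ) → ℝ := fun x => stdTrace (fderiv ℝ f x) / d with ha
  set b : (Fin d → ℝ) → ℝ := fun x => stdTrace (fderiv ℝ g x) / d with hb
  have hab : ∀ x ∈ E, 0 < a x ∧ 1 / a x ≤ b (f x) := by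
    intro x hx
    have hfx := hfE x hx
    refine pos_and_one_div_le_of_quadratic_nonneg fun t => ?_
    have hcomp : ∀ v, fderiv ℝ g (f x) (fderiv ℝ f x v) = v := by
      have h := (hgd _ hfx).differentiableAt.hasFDerivAt.comp x
        (hfd x hx).differentiableAt.hasFDerivAt
      rw [hgf.comp_eq_id] at h
      have := h.unique (hasFDerivAt_id x)
      exact fun v => congrArg (fun L : (Fin d → ℝ) →L[ℝ] (Fin d → ℝ) => L v) this
    have hquad := stdTrace_quadratic_nonneg (A := fderiv ℝ f x) (B := fderiv ℝ g (f x))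
      (fun v w => by
        rw [(hgd _ hfx).fderiv]
        simp [sub_dotProduct, dotProduct_sub,
          fderiv_gradVec_dotProduct_comm (hη.differentiable one_ne_zero) hfx v w])
      (fderiv_dotProduct_nonneg_of_monotone (fun y z => by
        have := sub_gradVec_monotone hη hηper hinj₂ y z
        rwa [show y - gradVec η y - (z - gradVec η z) = g y - g z by
          simp only [hg, hΨ]; module] at this) (hgd _ hfx).differentiableAt) hcomp t
    refine (div_nonneg hquad hdpos.le).trans_eq ?_
    simp only [ha, hb]
    field_simp
  have habT : ∀ x ∈ E, a x + lam * b x = 1 + lam + lam * T x := by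
    intro x hx
    simp only [ha, hb, hTtr, htrf x hx, htrg x hx]
    field_simp
    ring
  set K := 1 + lam + lam * M with hK
  set Λ := (K + √(K ^ 2 - 4 * lam)) / 2 with hΛ
  have hbound : ∀ x ∈ E, 0 < Λ ∧ lam / Λ ≤ a x ∧ 1 / Λ ≤ b x := fun x hx =>
    root_div_le_of_orbit_bounds h0 hfg hfE hgE hab (fun y hy => by
      rw [habT y hy, hK]
      gcongr
      exact hTM y) hx
  obtain ⟨x₀, hx₀⟩ := hEdense.nonempty
  have hΛ0 : 0 < Λ := (hbound x₀ hx₀).1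
  have hlow : ∀ x, 2 * (lam / Λ) ≤ 1 + lam + lam * T x := by
    have hclosed : IsClosed {x | 2 * (lam / Λ) ≤ 1 + lam + lam * T x} :=
      isClosed_le continuous_const (by fun_prop)
    have hsub : E ⊆ {x | 2 * (lam / Λ) ≤ 1 + lam + lam * T x} := fun x hx => by
      obtain ⟨-, h2, h3⟩ := hbound x hx
      have h4 := mul_le_mul_of_nonneg_left h3 h0.le
      rw [mul_one_div] at h4
      rw [Set.mem_ofPred_eq, ← habT x hx]
      linarith
    intro x
    exact closure_minimal hsub hclosed (hEdense x)
  obtain ⟨xm, -, hxm⟩ := hm₂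
  have hm := hlow xm
  rw [hxm] at hm
  have hlΛ : 0 < lam / Λ := div_pos h0 hΛ0
  refine ⟨?_, le_max_of_le_right ?_⟩
  · rw [div_lt_iff₀ h0]
    linarith
  · have h2 : lam / Λ ≤ 1 + lam * m / (1 + lam) := by
      rw [← sub_le_iff_le_add', le_div_iff₀ (by linarith)]
      nlinarith
    refine (inv_anti₀ hlΛ h2).trans_eq ?_
    rw [inv_div, hΛ]
    field_simp
end
end
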